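/- arXiv:1302.3866 — 2 statements merged into one kernel-verified Lean document; each statement's English description precedes it below -/
import Mathlib

section
/- Let A satisfy (H1), β_i ∈ (-2,0] for all i ∈ I with not all β_i equal to 0, and let u be a solution of the singular Liouville system. For λ > 0 define Σ_λ = {x ∈ ℝ² : x₁ > λ}, u_i^λ(x₁,x₂) = u_i(2λ−x₁, x₂), and w_i^λ = u_i^λ − u_i on Σ_λ. Then the quantity λ̄ := inf{λ > 0 : min{w_1^μ,...,w_n^μ} > 0 in Σ_μ for all μ ≥ λ} equals 0; in particular u_i(−x₁,x₂) ≥ u_i(x₁,x₂) for all x₁ ≥ 0 and all i ∈ I. -/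
open Set MeasureTheory

/-- Hypothesis (H1): symmetric, nonnegative entries, irreducible, invertible. -/
def H1 {n : ℕ} (A : Matrix (Fin n) (Fin n) ℝ) : Prop :=
  A.IsSymm ∧ (∀ i j, 0 ≤ A i j) ∧
  (∀ S : Finset (Fin n), S.Nonempty → S ≠ Finset.univ → ∃ i ∈ S, ∃ j ∈ Sᶜ, A i j ≠ 0) ∧
  IsUnit A.det

/-- The Euclidean norm on ℝ². -/
noncomputable def nrm (x : ℝ × ℝ) : ℝ := Real.sqrt (x.1 ^ 2 + x.2 ^ 2)

/-- The Laplacian on ℝ²: sum of the two second partial derivatives. -/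
noncomputable def lap (u : ℝ × ℝ → ℝ) (x : ℝ × ℝ) : ℝ :=
  deriv (deriv (fun s => u (s, x.2))) x.1 + deriv (deriv (fun t => u (x.1, t))) x.2

/-- Solution (not necessarily radial) of the singular Liouville system on ℝ²
with the finite-energy condition. -/
def PDESolution {n : ℕ} (A : Matrix (Fin n) (Fin n) ℝ) (β : Fin n → ℝ)
    (u : Fin n → ℝ × ℝ → ℝ) : Prop :=
  (∀ i, Continuous (u i)) ∧
  (∀ i, ∀ x : ℝ × ℝ, x ≠ 0 → ContDiffAt ℝ 2 (u i) x) ∧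
  (∀ i, ∀ x : ℝ × ℝ, x ≠ 0 →
      lap (u i) x + ∑ j, A i j * nrm x ^ β j * Real.exp (u j x) = 0) ∧
  (∀ i, Integrable (fun x : ℝ × ℝ => nrm x ^ β i * Real.exp (u i x)))

/-!
The moving plane method. At infinity the equation only enters through the potentials
`|x|² |x|^β e^u`, and these tend to `0`: on the disc of radius `|x| / 2` about `x` the energy is
small, so a point-picking argument bounds the density there. Since `x₁^(1/2) |x|^(1/8)` is positive
on the half-plane and has Laplacian below a negative multiple of `|x|⁻²` times itself, adding a
small multiple of it shows that `w^λ` can only be negative in a disc independent of `λ`.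
If `w^λ ≥ 0`, the minimum principle, in which the singular point `(2λ, 0)` is removable,
and irreducibility leave `w^λ > 0` or `w^λ ≡ 0`, and the latter forces all `β_i = 0`. Now
`{λ > 0 | w^λ > 0}` is open by the Hopf lemma on the line `x₁ = λ`, closed in `(0, ∞)` by
continuity, and contains large `λ`, so it is all of `(0, ∞)`.
-/

open Filter Topology

/-! ### The Laplacian -/

section Laplacian

variable {f g : ℝ × ℝ → ℝ} {x : ℝ × ℝ}

lemma tendsto_prodMk_left_nhds (x : ℝ × ℝ) : Tendsto (fun s : ℝ => (s, x.2)) (𝓝 x.1) (𝓝 x) :=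
  (by fun_prop : Continuous fun s : ℝ => (s, x.2)).tendsto x.1

lemma tendsto_prodMk_right_nhds (x : ℝ × ℝ) : Tendsto (fun t : ℝ => (x.1, t)) (𝓝 x.2) (𝓝 x) :=
  (by fun_prop : Continuous fun t : ℝ => (x.1, t)).tendsto x.2

lemma contDiffAt_slice_fst (hf : ContDiffAt ℝ 2 f x) : ContDiffAt ℝ 2 (fun s => f (s, x.2)) x.1 :=
  ContDiffAt.comp (f := fun s : ℝ => (s, x.2)) x.1 hf (contDiffAt_id.prodMk contDiffAt_const)

lemma contDiffAt_slice_snd (hf : ContDiffAt ℝ 2 f x) : ContDiffAt ℝ 2 (fun t => f (x.1, t)) x.2 :=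
  ContDiffAt.comp (f := fun t : ℝ => (x.1, t)) x.2 hf (contDiffAt_const.prodMk contDiffAt_id)

lemma deriv_deriv_add {f g : ℝ → ℝ} {t : ℝ} (hf : ContDiffAt ℝ 2 f t) (hg : ContDiffAt ℝ 2 g t) :
    deriv (deriv fun s => f s + g s) t = deriv (deriv f) t + deriv (deriv g) t := by
  simpa only [iteratedDeriv_succ, iteratedDeriv_zero] using iteratedDeriv_fun_add (n := 2) hf hg

lemma lap_add (hf : ContDiffAt ℝ 2 f x) (hg : ContDiffAt ℝ 2 g x) :
    lap (fun y => f y + g y) x = lap f x + lap g x := by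
  unfold lap
  rw [deriv_deriv_add (contDiffAt_slice_fst hf) (contDiffAt_slice_fst hg),
    deriv_deriv_add (contDiffAt_slice_snd hf) (contDiffAt_slice_snd hg)]
  ring

lemma lap_const_mul (c : ℝ) (f : ℝ × ℝ → ℝ) (x : ℝ × ℝ) :
    lap (fun y => c * f y) x = c * lap f x := by
  unfold lap
  simp only [deriv_const_mul_field', deriv_const_mul_field]
  ring

lemma lap_sub (hf : ContDiffAt ℝ 2 f x) (hg : ContDiffAt ℝ 2 g x) :
    lap (fun y => f y - g y) x = lap f x - lap g x := by
  have hneg : lap (fun y => (-1) * g y) x = -lap g x := by rw [lap_const_mul]; ring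
  rw [sub_eq_add_neg, ← hneg, ← lap_add hf (contDiffAt_const.mul hg)]
  simp only [neg_one_mul, sub_eq_add_neg]

lemma lap_const (c : ℝ) (x : ℝ × ℝ) : lap (fun _ => c) x = 0 := by simp [lap]

lemma lap_congr (h : f =ᶠ[𝓝 x] g) : lap f x = lap g x := by
  have h₁ := h.comp_tendsto (tendsto_prodMk_left_nhds x)
  have h₂ := h.comp_tendsto (tendsto_prodMk_right_nhds x)
  exact congrArg₂ (· + ·) h₁.deriv.deriv_eq h₂.deriv.deriv_eq

lemma lap_comp_sub_const (f : ℝ × ℝ → ℝ) (p x : ℝ × ℝ) :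
    lap (fun y => f (y - p)) x = lap f (x - p) := by
  have hderiv (h : ℝ → ℝ) (a t : ℝ) :
      deriv (deriv fun s => h (s - a)) t = deriv (deriv h) (t - a) := by
    rw [funext fun s => deriv_comp_sub_const (f := h) a s, deriv_comp_sub_const]
  exact congrArg₂ (· + ·) (hderiv (fun s => f (s, x.2 - p.2)) p.1 x.1)
    (hderiv (fun t => f (x.1 - p.1, t)) p.2 x.2)

/-- The reflection `x ↦ x^l` of the plane across the line `x₁ = l`. -/
def reflection (l : ℝ) (x : ℝ × ℝ) : ℝ × ℝ := (2 * l - x.1, x.2)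

lemma lap_comp_reflection (f : ℝ × ℝ → ℝ) (l : ℝ) (x : ℝ × ℝ) :
    lap (fun y => f (reflection l y)) x = lap f (reflection l x) := by
  have hderiv (h : ℝ → ℝ) (a t : ℝ) :
      deriv (deriv fun s => h (a - s)) t = deriv (deriv h) (a - t) := by
    rw [funext fun s => deriv_comp_const_sub (f := h) a s, deriv.fun_neg, deriv_comp_const_sub,
      neg_neg]
  exact congrArg (· + _) (hderiv (fun s => f (s, x.2)) (2 * l) x.1)

lemma deriv_deriv_nonneg_of_isLocalMin {f : ℝ → ℝ} {t : ℝ} (hf : ContinuousAt f t)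
    (hmin : IsLocalMin f t) : 0 ≤ deriv (deriv f) t := by
  by_contra! hneg
  have hmax := isLocalMax_of_deriv_deriv_neg hneg hmin.deriv_eq_zero hf
  have hconst : f =ᶠ[𝓝 t] fun _ => f t := by
    filter_upwards [hmin, hmax] with s h₁ h₂ using le_antisymm h₂ h₁
  simp [hconst.deriv.deriv_eq] at hneg

lemma lap_nonneg_of_isLocalMin (hf : ContinuousAt f x) (hmin : IsLocalMin f x) : 0 ≤ lap f x :=
  add_nonneg
    (deriv_deriv_nonneg_of_isLocalMin
      (ContinuousAt.comp (f := fun s : ℝ => (s, x.2)) hf (by fun_prop))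
      ((tendsto_prodMk_left_nhds x).eventually hmin))
    (deriv_deriv_nonneg_of_isLocalMin
      (ContinuousAt.comp (f := fun t : ℝ => (x.1, t)) hf (by fun_prop))
      ((tendsto_prodMk_right_nhds x).eventually hmin))

lemma deriv_deriv_comp_curve {E : Type*} [NormedAddCommGroup E] [NormedSpace ℝ E] {z : E → ℝ}
    {γ γ' : ℝ → E} {γ'' : E} {t : ℝ} (hz : ContDiffAt ℝ 2 z (γ t))
    (hγ : ∀ᶠ s in 𝓝 t, HasDerivAt γ (γ' s) s) (hγ' : HasDerivAt γ' γ'' t) :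
    deriv (deriv fun s => z (γ s)) t =
      fderiv ℝ (fderiv ℝ z) (γ t) (γ' t) (γ' t) + fderiv ℝ z (γ t) γ'' := by
  have hγt : HasDerivAt γ (γ' t) t := hγ.self_of_nhds
  have hz_near : ∀ᶠ y in 𝓝 (γ t), DifferentiableAt ℝ z y :=
    (hz.eventually (by simp)).mono fun y hy => hy.differentiableAt two_ne_zero
  have hderiv : (deriv fun s => z (γ s)) =ᶠ[𝓝 t] fun s => fderiv ℝ z (γ s) (γ' s) := by
    filter_upwards [hγ, hγt.continuousAt.eventually hz_near] with s hs hzs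
    exact (hzs.hasFDerivAt.comp_hasDerivAt s hs).deriv
  have hfderiv : DifferentiableAt ℝ (fderiv ℝ z) (γ t) :=
    (hz.fderiv_right (m := 1) (by norm_num)).differentiableAt one_ne_zero
  rw [hderiv.deriv_eq]
  exact ((hfderiv.hasFDerivAt.comp_hasDerivAt t hγt).clm_apply hγ').deriv

lemma hasDerivAt_prodMk_left (s b : ℝ) : HasDerivAt (fun s : ℝ => (s, b)) ((1 : ℝ), (0 : ℝ)) s :=
  (hasDerivAt_id s).prodMk (hasDerivAt_const s b)

lemma hasDerivAt_prodMk_right (a t : ℝ) : HasDerivAt (fun t : ℝ => (a, t)) ((0 : ℝ), (1 : ℝ)) t :=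
  (hasDerivAt_const t a).prodMk (hasDerivAt_id t)

lemma lap_eq_fderiv_fderiv (hf : ContDiffAt ℝ 2 f x) :
    lap f x = fderiv ℝ (fderiv ℝ f) x (1, 0) (1, 0) + fderiv ℝ (fderiv ℝ f) x (0, 1) (0, 1) := by
  have h₁ := deriv_deriv_comp_curve (γ := fun s => (s, x.2)) (t := x.1) hf
    (.of_forall (hasDerivAt_prodMk_left · x.2)) (hasDerivAt_const x.1 ((1 : ℝ), (0 : ℝ)))
  have h₂ := deriv_deriv_comp_curve (γ := fun t => (x.1, t)) (t := x.2) hf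
    (.of_forall (hasDerivAt_prodMk_right x.1)) (hasDerivAt_const x.2 ((0 : ℝ), (1 : ℝ)))
  simpa only [lap, map_zero, add_zero] using congrArg₂ (· + ·) h₁ h₂

lemma deriv_deriv_comp {φ φ' h : ℝ → ℝ} {φ'' t : ℝ} (hh : ContDiffAt ℝ 2 h t)
    (hφ : ∀ᶠ r in 𝓝 (h t), HasDerivAt φ (φ' r) r) (hφ' : HasDerivAt φ' φ'' (h t)) :
    deriv (deriv fun s => φ (h s)) t = φ' (h t) * deriv (deriv h) t + φ'' * deriv h t ^ 2 := by
  have hh_near : ∀ᶠ s in 𝓝 t, DifferentiableAt ℝ h s :=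
    (hh.eventually (by simp)).mono fun s hs => hs.differentiableAt two_ne_zero
  have hderiv : (deriv fun s => φ (h s)) =ᶠ[𝓝 t] fun s => φ' (h s) * deriv h s := by
    filter_upwards [hh.continuousAt.eventually hφ, hh_near] with s hs hhs
    exact (hs.comp s hhs.hasDerivAt).deriv
  have hh' : DifferentiableAt ℝ (deriv h) t :=
    (hh.derivWithin (m := 1) (by norm_num)).differentiableAt one_ne_zero
  have hφh : HasDerivAt (fun s => φ' (h s)) (φ'' * deriv h t) t :=
    hφ'.comp t hh_near.self_of_nhds.hasDerivAt
  rw [hderiv.deriv_eq, (hφh.fun_mul hh'.hasDerivAt).deriv]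
  ring

lemma lap_comp {φ φ' : ℝ → ℝ} {φ'' : ℝ} (hf : ContDiffAt ℝ 2 f x)
    (hφ : ∀ᶠ r in 𝓝 (f x), HasDerivAt φ (φ' r) r) (hφ' : HasDerivAt φ' φ'' (f x)) :
    lap (fun y => φ (f y)) x = φ' (f x) * lap f x +
      φ'' * (deriv (fun s => f (s, x.2)) x.1 ^ 2 + deriv (fun t => f (x.1, t)) x.2 ^ 2) := by
  unfold lap
  rw [deriv_deriv_comp (contDiffAt_slice_fst hf) hφ hφ',
    deriv_deriv_comp (contDiffAt_slice_snd hf) hφ hφ']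
  ring

end Laplacian

/-! ### The Euclidean norm and discs -/

lemma nrm_eq_norm (x : ℝ × ℝ) : nrm x = ‖Complex.equivRealProdCLM.symm x‖ :=
  (Complex.norm_eq_sqrt_sq_add_sq (Complex.equivRealProd.symm x)).symm

lemma nrm_nonneg (x : ℝ × ℝ) : 0 ≤ nrm x := Real.sqrt_nonneg _

lemma nrm_sq (x : ℝ × ℝ) : nrm x ^ 2 = x.1 ^ 2 + x.2 ^ 2 := Real.sq_sqrt (by positivity)

lemma nrm_eq_zero {x : ℝ × ℝ} : nrm x = 0 ↔ x = 0 := by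
  rw [nrm_eq_norm, norm_eq_zero, ContinuousLinearEquiv.map_eq_zero_iff]

lemma nrm_pos {x : ℝ × ℝ} : 0 < nrm x ↔ x ≠ 0 := by
  rw [(nrm_nonneg x).lt_iff_ne', Ne, nrm_eq_zero]

lemma nrm_zero : nrm 0 = 0 := nrm_eq_zero.2 rfl

lemma continuous_nrm : Continuous nrm := by unfold nrm; fun_prop

lemma nrm_add_le (x y : ℝ × ℝ) : nrm (x + y) ≤ nrm x + nrm y := by
  simpa only [nrm_eq_norm, map_add] using norm_add_le (Complex.equivRealProdCLM.symm x) _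

lemma nrm_sub_comm (x y : ℝ × ℝ) : nrm (x - y) = nrm (y - x) := by
  simpa only [nrm_eq_norm, map_sub] using norm_sub_rev _ _

lemma nrm_le_nrm_add_nrm_sub (x y : ℝ × ℝ) : nrm x ≤ nrm y + nrm (x - y) := by
  simpa using nrm_add_le y (x - y)

lemma abs_fst_le_nrm (x : ℝ × ℝ) : |x.1| ≤ nrm x :=
  Real.abs_le_sqrt (le_add_of_nonneg_right (sq_nonneg _))

lemma norm_le_nrm (x : ℝ × ℝ) : ‖x‖ ≤ nrm x :=
  max_le (abs_fst_le_nrm x) (Real.abs_le_sqrt (le_add_of_nonneg_left (sq_nonneg _)))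

lemma contDiffAt_nrm {x : ℝ × ℝ} (hx : x ≠ 0) : ContDiffAt ℝ 2 nrm x := by
  have hpos : x.1 ^ 2 + x.2 ^ 2 ≠ 0 := by rw [← nrm_sq]; exact pow_ne_zero 2 (nrm_pos.2 hx).ne'
  unfold nrm
  exact ContDiffAt.sqrt (by fun_prop) hpos

/-- The open Euclidean disc (`Metric.ball` on `ℝ × ℝ` is a square). -/
def disc (p : ℝ × ℝ) (r : ℝ) : Set (ℝ × ℝ) := {x | nrm (x - p) < r}

/-- The closed Euclidean disc (`Metric.closedBall` on `ℝ × ℝ` is a square). -/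
def closedDisc (p : ℝ × ℝ) (r : ℝ) : Set (ℝ × ℝ) := {x | nrm (x - p) ≤ r}

section Disc

variable {p x : ℝ × ℝ} {r : ℝ}

lemma mem_disc : x ∈ disc p r ↔ nrm (x - p) < r := Iff.rfl

lemma mem_closedDisc : x ∈ closedDisc p r ↔ nrm (x - p) ≤ r := Iff.rfl

lemma continuous_nrm_sub (p : ℝ × ℝ) : Continuous fun x => nrm (x - p) :=
  continuous_nrm.comp (continuous_sub_right p)

lemma isOpen_disc : IsOpen (disc p r) := isOpen_lt (continuous_nrm_sub p) continuous_const

lemma isClosed_closedDisc : IsClosed (closedDisc p r) :=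
  isClosed_le (continuous_nrm_sub p) continuous_const

lemma isCompact_closedDisc : IsCompact (closedDisc p r) :=
  (isCompact_closedBall p r).of_isClosed_subset isClosed_closedDisc fun x hx => by
    rw [mem_closedBall_iff_norm]
    exact (norm_le_nrm _).trans hx

lemma disc_subset_closedDisc : disc p r ⊆ closedDisc p r := fun _ hx => le_of_lt (mem_disc.1 hx)

lemma mem_closedDisc_self (hr : 0 ≤ r) : p ∈ closedDisc p r := by
  rwa [mem_closedDisc, sub_self, nrm_zero]

lemma disc_mem_nhds (hr : 0 < r) : disc p r ∈ 𝓝 p :=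
  isOpen_disc.mem_nhds (by rwa [mem_disc, sub_self, nrm_zero])

lemma exists_closedDisc_subset {s : Set (ℝ × ℝ)} (hs : s ∈ 𝓝 p) : ∃ r > 0, closedDisc p r ⊆ s := by
  obtain ⟨r, hr, hsub⟩ := Metric.nhds_basis_closedBall.mem_iff.1 hs
  exact ⟨r, hr, fun x hx => hsub (mem_closedBall_iff_norm.2 ((norm_le_nrm _).trans hx))⟩

lemma volume_real_disc (hr : 0 ≤ r) : volume.real (disc p r) = Real.pi * r ^ 2 := by
  have hpre : Complex.equivRealProd ⁻¹' disc p r =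
      Metric.ball (Complex.equivRealProd.symm p) r := by
    ext w
    rw [mem_preimage, mem_disc, nrm_eq_norm, mem_ball_iff_norm]
    rfl
  rw [← Complex.volume_preserving_equiv_real_prod.measureReal_preimage
    isOpen_disc.measurableSet.nullMeasurableSet]
  change volume.real (Complex.equivRealProd ⁻¹' disc p r) = _
  rw [hpre, measureReal_def, Complex.volume_ball, ENNReal.toReal_mul, ENNReal.toReal_pow,
    ENNReal.toReal_ofReal hr, mul_comm]
  rfl

lemma integral_disc_const (hr : 0 ≤ r) (c : ℝ) : ∫ _x in disc p r, c = Real.pi * r ^ 2 * c := by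
  rw [setIntegral_const, volume_real_disc hr, smul_eq_mul]

lemma integrableOn_disc_of_continuousOn {f : ℝ × ℝ → ℝ} (hf : ContinuousOn f (closedDisc p r)) :
    IntegrableOn f (disc p r) :=
  (hf.integrableOn_compact isCompact_closedDisc).mono_set disc_subset_closedDisc

lemma nrm_polarCoord_symm {q : ℝ × ℝ} (hq : 0 ≤ q.1) : nrm (polarCoord.symm q) = q.1 := by
  rw [← Real.sqrt_sq hq, nrm, polarCoord_symm_apply]
  congr 1
  linear_combination q.1 ^ 2 * Real.cos_sq_add_sin_sq q.2

lemma integral_disc_eq_polar {f : ℝ × ℝ → ℝ} (hf : ContinuousOn f (closedDisc p r)) :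
    ∫ x in disc p r, f x =
      ∫ ρ in Ioo 0 r, ∫ θ in (-Real.pi)..Real.pi, ρ * f (polarCoord.symm (ρ, θ) + p) := by
  have hpi : -Real.pi ≤ Real.pi := neg_le_self Real.pi_pos.le
  let S : Set (ℝ × ℝ) := Ioo 0 r ×ˢ Ioo (-Real.pi) Real.pi
  let G : ℝ × ℝ → ℝ := fun q => q.1 * f (polarCoord.symm q + p)
  have hpolar : ∫ x in disc p r, f x = ∫ q in S, G q := by
    have hinter : polarCoord.target ∩ S = S :=
      inter_eq_right.2 (prod_mono_left Ioo_subset_Ioi_self)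
    rw [← integral_indicator isOpen_disc.measurableSet,
      ← integral_add_right_eq_self _ p,
      ← integral_comp_polarCoord_symm fun x => (disc p r).indicator f (x + p),
      ← hinter, ← setIntegral_indicator (measurableSet_Ioo.prod measurableSet_Ioo)]
    refine setIntegral_congr_fun polarCoord.open_target.measurableSet fun q hq => ?_
    have hmem : polarCoord.symm q + p ∈ disc p r ↔ q ∈ S := by
      rw [mem_disc, add_sub_cancel_right, nrm_polarCoord_symm (le_of_lt hq.1)]
      exact ⟨fun h => ⟨⟨hq.1, h⟩, hq.2⟩, fun h => h.1.2⟩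
    by_cases hqS : q ∈ S
    · rw [indicator_of_mem hqS, indicator_of_mem (hmem.2 hqS), smul_eq_mul]
    · rw [indicator_of_notMem hqS, indicator_of_notMem (mt hmem.1 hqS), smul_zero]
  have hGcont : ContinuousOn G (Icc 0 r ×ˢ Icc (-Real.pi) Real.pi) := by
    refine continuousOn_fst.mul
      (hf.comp (continuous_polarCoord_symm.add continuous_const).continuousOn fun q hq => ?_)
    rw [mem_closedDisc, add_sub_cancel_right, nrm_polarCoord_symm hq.1.1]
    exact hq.1.2
  have hGint : IntegrableOn G S (volume.prod volume) :=
    (hGcont.integrableOn_compact (isCompact_Icc.prod isCompact_Icc)).mono_set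
      (prod_mono Ioo_subset_Icc_self Ioo_subset_Icc_self)
  rw [hpolar, Measure.volume_eq_prod, setIntegral_prod _ hGint]
  simp only [intervalIntegral.integral_of_le hpi, integral_Ioc_eq_integral_Ioo, G]

end Disc

/-! ### The mean value inequality -/

section CircleMean

lemma contDiffOn_deriv_fst {F : ℝ × ℝ → ℝ} {U : Set (ℝ × ℝ)} {m n : WithTop ℕ∞} (hU : IsOpen U)
    (hF : ContDiffOn ℝ n F U) (hmn : m + 1 ≤ n) :
    ContDiffOn ℝ m (fun q => deriv (fun s => F (s, q.2)) q.1) U := by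
  refine ((hF.fderiv_of_isOpen hU hmn).clm_apply
    (contDiffOn_const (c := ((1 : ℝ), (0 : ℝ))))).congr fun q hq => ?_
  have hFq : DifferentiableAt ℝ F q :=
    (hF.contDiffAt (hU.mem_nhds hq)).differentiableAt
      (ne_of_gt (lt_of_lt_of_le (by simp) (le_add_self.trans hmn)))
  exact (hFq.hasFDerivAt.comp_hasDerivAt q.1 (hasDerivAt_prodMk_left q.1 q.2)).deriv

lemma hasDerivAt_integral_of_contDiffOn {F : ℝ × ℝ → ℝ} {D : Set ℝ} {s : ℝ} (a b : ℝ)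
    (hD : IsOpen D) (hF : ContDiffOn ℝ 1 F (D ×ˢ univ)) (hs : s ∈ D) :
    HasDerivAt (fun s => ∫ θ in a..b, F (s, θ))
      (∫ θ in a..b, deriv (fun t => F (t, θ)) s) s := by
  have hF' : ContinuousOn (fun q : ℝ × ℝ => deriv (fun t => F (t, q.2)) q.1) (D ×ˢ univ) :=
    (contDiffOn_deriv_fst (m := 0) (hD.prod isOpen_univ) hF (by simp)).continuousOn
  have hslice {G : ℝ × ℝ → ℝ} (hG : ContinuousOn G (D ×ˢ univ)) {t : ℝ} (ht : t ∈ D) :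
      Continuous fun θ => G (t, θ) :=
    hG.comp_continuous (Continuous.prodMk_right t) fun _ => ⟨ht, trivial⟩
  obtain ⟨δ, hδ, hδD⟩ := Metric.nhds_basis_closedBall.mem_iff.1 (hD.mem_nhds hs)
  obtain ⟨C, hC⟩ := ((isCompact_closedBall s δ).prod isCompact_uIcc).exists_bound_of_continuousOn
    (hF'.mono (prod_mono hδD (subset_univ (uIcc a b))))
  refine (intervalIntegral.hasDerivAt_integral_of_dominated_loc_of_deriv_le
    (F := fun s θ => F (s, θ)) (bound := fun _ => C) (Metric.closedBall_mem_nhds s hδ) ?_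
    ((hslice hF.continuousOn hs).intervalIntegrable a b) (hslice hF' hs).aestronglyMeasurable
    (.of_forall fun θ hθ t ht => hC (t, θ) ⟨ht, uIoc_subset_uIcc hθ⟩) intervalIntegrable_const
    (.of_forall fun θ _ t ht => ?_)).2
  · filter_upwards [hD.mem_nhds hs] with t ht
    exact (hslice hF.continuousOn ht).aestronglyMeasurable
  · have htθ : (t, θ) ∈ D ×ˢ (univ : Set ℝ) := ⟨hδD ht, mem_univ θ⟩
    have hFt := hF.contDiffAt ((hD.prod isOpen_univ).mem_nhds htθ)
    exact ((hFt.differentiableAt one_ne_zero).comp t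
      (hasDerivAt_prodMk_left t θ).differentiableAt).hasDerivAt

lemma integral_deriv_deriv_eq_zero_of_periodic {h : ℝ → ℝ} {a b : ℝ} (hh : ContDiff ℝ 2 h)
    (hper : Function.Periodic h (b - a)) : ∫ θ in a..b, deriv (deriv h) θ = 0 := by
  have hderiv : deriv h b = deriv h a := by
    rw [← sub_add_cancel b a, add_comm, ← deriv_comp_add_const, funext hper]
  have hh' : ContDiff ℝ 1 (deriv h) := ContDiff.deriv' hh
  rw [intervalIntegral.integral_deriv_eq_sub
    (fun θ _ => (hh'.differentiable one_ne_zero).differentiableAt)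
    ((hh'.continuous_deriv le_rfl).intervalIntegrable a b), hderiv, sub_self]

/-- Integrating over a period kills the second derivative in `θ`, so the second derivative in `s` of
the integral is the integral of the Laplacian. -/
lemma convexOn_integral_of_lap_nonneg {F : ℝ × ℝ → ℝ} {D : Set ℝ} {a b : ℝ} (hD : IsOpen D)
    (hDc : Convex ℝ D) (hab : a ≤ b) (hF : ContDiffOn ℝ 2 F (D ×ˢ univ))
    (hper : ∀ s ∈ D, Function.Periodic (fun θ => F (s, θ)) (b - a))
    (hlap : ∀ q ∈ D ×ˢ univ, 0 ≤ lap F q) : ConvexOn ℝ D fun s => ∫ θ in a..b, F (s, θ) := by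
  have hU : IsOpen (D ×ˢ (univ : Set ℝ)) := hD.prod isOpen_univ
  have hF' := contDiffOn_deriv_fst (m := 1) hU hF (by norm_num)
  have hF'' := contDiffOn_deriv_fst (m := 0) hU hF' (by norm_num)
  have hψ (s) (hs : s ∈ D) := hasDerivAt_integral_of_contDiffOn a b hD (hF.of_le (by norm_num)) hs
  have hψ' (s) (hs : s ∈ D) := hasDerivAt_integral_of_contDiffOn a b hD hF' hs
  refine convexOn_of_hasDerivWithinAt2_nonneg hDc
    (fun s hs => (hψ s hs).continuousAt.continuousWithinAt)
    (fun s hs => (hψ s (interior_subset hs)).hasDerivWithinAt)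
    (fun s hs => (hψ' s (interior_subset hs)).hasDerivWithinAt) fun s hs => ?_
  have hs := interior_subset hs
  have hFs : ContDiff ℝ 2 fun θ => F (s, θ) := contDiff_iff_contDiffAt.2 fun θ =>
    contDiffAt_slice_snd (hF.contDiffAt (hU.mem_nhds (⟨hs, mem_univ θ⟩ : (s, θ) ∈ D ×ˢ univ)))
  have hcont_s : Continuous fun θ => deriv (deriv fun t => F (t, θ)) s :=
    hF''.continuousOn.comp_continuous (Continuous.prodMk_right s) fun θ => ⟨hs, mem_univ θ⟩
  have hcont_θ : Continuous (deriv (deriv fun θ => F (s, θ))) :=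
    (ContDiff.deriv' hFs).continuous_deriv le_rfl
  calc 0 ≤ ∫ θ in a..b, lap F (s, θ) :=
        intervalIntegral.integral_nonneg hab fun θ _ => hlap _ ⟨hs, mem_univ θ⟩
    _ = (∫ θ in a..b, deriv (deriv fun t => F (t, θ)) s) +
          ∫ θ in a..b, deriv (deriv fun θ => F (s, θ)) θ :=
        intervalIntegral.integral_add (hcont_s.intervalIntegrable a b)
          (hcont_θ.intervalIntegrable a b)
    _ = ∫ θ in a..b, deriv (deriv fun t => F (t, θ)) s := by
        rw [integral_deriv_deriv_eq_zero_of_periodic hFs (hper s hs), add_zero]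

lemma convexOn_le_of_tendsto_atBot {ψ : ℝ → ℝ} {L c s : ℝ} (hψ : ConvexOn ℝ (Iio L) ψ)
    (hlim : Tendsto ψ atBot (𝓝 c)) (hs : s < L) : c ≤ ψ s := by
  have hmid : ∀ᶠ t in atBot, ψ t ≤ 2⁻¹ * ψ (2 * t - s) + 2⁻¹ * ψ s := by
    filter_upwards [eventually_lt_atBot s] with t ht
    have h2t : 2 * t - s ∈ Iio L := mem_Iio.2 (by linarith)
    have hhalf : (0 : ℝ) ≤ 2⁻¹ := by norm_num
    have := hψ.2 h2t hs hhalf hhalf (by norm_num)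
    rwa [smul_eq_mul, smul_eq_mul, smul_eq_mul, smul_eq_mul,
      show 2⁻¹ * (2 * t - s) + 2⁻¹ * s = t by ring] at this
  have hdouble : Tendsto (fun t : ℝ => 2 * t - s) atBot atBot :=
    tendsto_atBot_add_const_right _ _ (tendsto_id.const_mul_atBot two_pos)
  have := le_of_tendsto_of_tendsto hlim
    (((hlim.comp hdouble).const_mul 2⁻¹).add_const (2⁻¹ * ψ s)) hmid
  linarith

/-- Log-polar coordinates centred at `p`; they are conformal, with factor `exp s`. -/
noncomputable def logPolar (p q : ℝ × ℝ) : ℝ × ℝ := polarCoord.symm (Real.exp q.1, q.2) + p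

variable {z : ℝ × ℝ → ℝ} {p q : ℝ × ℝ}

lemma nrm_logPolar_sub (p q : ℝ × ℝ) : nrm (logPolar p q - p) = Real.exp q.1 := by
  rw [logPolar, add_sub_cancel_right, nrm_polarCoord_symm (Real.exp_pos _).le]

lemma contDiff_logPolar (p : ℝ × ℝ) : ContDiff ℝ 2 (logPolar p) := by
  unfold logPolar
  simp only [polarCoord_symm_apply]
  fun_prop

lemma lap_comp_logPolar (hz : ContDiffAt ℝ 2 z (logPolar p q)) :
    lap (fun q => z (logPolar p q)) q = Real.exp q.1 ^ 2 * lap z (logPolar p q) := by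
  set radial : ℝ × ℝ := (Real.exp q.1 * Real.cos q.2, Real.exp q.1 * Real.sin q.2)
  set angular : ℝ × ℝ := (Real.exp q.1 * -Real.sin q.2, Real.exp q.1 * Real.cos q.2)
  have hs : deriv (deriv fun s => z (logPolar p (s, q.2))) q.1 =
      fderiv ℝ (fderiv ℝ z) (logPolar p q) radial radial + fderiv ℝ z (logPolar p q) radial := by
    have hexp (s : ℝ) : HasDerivAt
        (fun s => (Real.exp s * Real.cos q.2, Real.exp s * Real.sin q.2))
        (Real.exp s * Real.cos q.2, Real.exp s * Real.sin q.2) s :=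
      ((Real.hasDerivAt_exp s).mul_const _).prodMk ((Real.hasDerivAt_exp s).mul_const _)
    exact deriv_deriv_comp_curve (γ := fun s => logPolar p (s, q.2)) hz
      (.of_forall fun s => (hexp s).add_const p) (hexp q.1)
  have hθ : deriv (deriv fun θ => z (logPolar p (q.1, θ))) q.2 =
      fderiv ℝ (fderiv ℝ z) (logPolar p q) angular angular +
        fderiv ℝ z (logPolar p q) (-radial) := by
    have hcircle (θ : ℝ) : HasDerivAt
        (fun θ => (Real.exp q.1 * Real.cos θ, Real.exp q.1 * Real.sin θ))
        (Real.exp q.1 * -Real.sin θ, Real.exp q.1 * Real.cos θ) θ :=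
      ((Real.hasDerivAt_cos θ).const_mul _).prodMk ((Real.hasDerivAt_sin θ).const_mul _)
    have hcircle' : HasDerivAt
        (fun θ => (Real.exp q.1 * -Real.sin θ, Real.exp q.1 * Real.cos θ))
        (-radial) q.2 := by
      convert ((Real.hasDerivAt_sin q.2).fun_neg.const_mul (Real.exp q.1)).prodMk
        ((Real.hasDerivAt_cos q.2).const_mul (Real.exp q.1)) using 1
      simp [radial]
    exact deriv_deriv_comp_curve (γ := fun θ => logPolar p (q.1, θ)) hz
      (.of_forall fun θ => (hcircle θ).add_const p) hcircle'
  have hbasis (v : ℝ × ℝ) : v = v.1 • ((1 : ℝ), (0 : ℝ)) + v.2 • ((0 : ℝ), (1 : ℝ)) := by simp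
  rw [lap, hs, hθ, lap_eq_fderiv_fderiv hz, hbasis radial, hbasis angular]
  simp only [map_add, map_smul, map_neg, add_apply, smul_apply, smul_eq_mul, radial, angular]
  linear_combination Real.exp q.1 ^ 2 * (fderiv ℝ (fderiv ℝ z) (logPolar p q) (1, 0) (1, 0) +
    fderiv ℝ (fderiv ℝ z) (logPolar p q) (0, 1) (0, 1)) * Real.cos_sq_add_sin_sq q.2

lemma tendsto_integral_logPolar {L : ℝ} (a b : ℝ) (hz : ContinuousAt z p)
    (hcont : ∀ s < L, Continuous fun θ => z (logPolar p (s, θ))) :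
    Tendsto (fun s => ∫ θ in a..b, z (logPolar p (s, θ))) atBot (𝓝 ((b - a) * z p)) := by
  obtain ⟨r, hr, hbound⟩ := exists_closedDisc_subset
    (hz.abs.eventually (gt_mem_nhds (lt_add_one |z p|)))
  rw [← smul_eq_mul, ← intervalIntegral.integral_const]
  refine intervalIntegral.tendsto_integral_filter_of_dominated_convergence (fun _ => |z p| + 1)
    ?_ ?_ intervalIntegrable_const (.of_forall fun θ _ => ?_)
  · filter_upwards [eventually_lt_atBot L] with s hs using (hcont s hs).aestronglyMeasurable
  · filter_upwards [Real.tendsto_exp_atBot.eventually (gt_mem_nhds hr)] with s hs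
    refine .of_forall fun θ _ => le_of_lt (hbound ?_)
    rw [mem_closedDisc, nrm_logPolar_sub]
    exact hs.le
  · refine hz.tendsto.comp ?_
    have hpolar : Continuous fun r : ℝ => polarCoord.symm (r, θ) + p :=
      (continuous_polarCoord_symm.comp (by fun_prop : Continuous fun r : ℝ => (r, θ))).add_const p
    exact (hpolar.tendsto' 0 p (by simp [polarCoord_symm_apply])).comp Real.tendsto_exp_atBot

variable {τ : ℝ}

lemma two_pi_mul_le_integral_circle {ρ : ℝ} (hρ : 0 < ρ) (hρτ : ρ < τ) (hc : ContinuousAt z p)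
    (hz : ∀ x ∈ disc p τ, x ≠ p → ContDiffAt ℝ 2 z x ∧ 0 ≤ lap z x) :
    2 * Real.pi * z p ≤ ∫ θ in (-Real.pi)..Real.pi, z (polarCoord.symm (ρ, θ) + p) := by
  have hmem (q) (hq : q ∈ Iio (Real.log τ) ×ˢ univ) :
      logPolar p q ∈ disc p τ ∧ logPolar p q ≠ p := by
    refine ⟨?_, fun h => (Real.exp_pos q.1).ne' ?_⟩
    · rw [mem_disc, nrm_logPolar_sub]
      exact (Real.lt_log_iff_exp_lt (hρ.trans hρτ)).1 hq.1
    · rw [← nrm_logPolar_sub p, h, sub_self, nrm_zero]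
  have hzq (q) (hq : q ∈ Iio (Real.log τ) ×ˢ univ) := hz _ (hmem q hq).1 (hmem q hq).2
  have hsmooth : ContDiffOn ℝ 2 (fun q => z (logPolar p q)) (Iio (Real.log τ) ×ˢ univ) :=
    fun q hq => ((hzq q hq).1.comp q (contDiff_logPolar p).contDiffAt).contDiffWithinAt
  have hconvex : ConvexOn ℝ (Iio (Real.log τ))
      fun s => ∫ θ in (-Real.pi)..Real.pi, z (logPolar p (s, θ)) := by
    refine convexOn_integral_of_lap_nonneg isOpen_Iio (convex_Iio _)
      (neg_le_self Real.pi_pos.le) hsmooth (fun s _ θ => ?_) fun q hq => ?_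
    · simp only [logPolar, polarCoord_symm_apply, sub_neg_eq_add, ← two_mul,
        Real.cos_add_two_pi, Real.sin_add_two_pi]
    · rw [lap_comp_logPolar (hzq q hq).1]
      exact mul_nonneg (sq_nonneg _) (hzq q hq).2
  have hlim := tendsto_integral_logPolar (-Real.pi) Real.pi hc fun s hs =>
    hsmooth.continuousOn.comp_continuous (Continuous.prodMk_right s) fun θ => ⟨hs, mem_univ θ⟩
  have := convexOn_le_of_tendsto_atBot hconvex hlim (Real.log_lt_log hρ hρτ)
  simpa only [logPolar, Real.exp_log hρ, sub_neg_eq_add, ← two_mul] using this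

lemma pi_mul_sq_mul_le_integral_disc (hτ : 0 < τ) (hc : ContinuousOn z (closedDisc p τ))
    (hz : ∀ x ∈ disc p τ, x ≠ p → ContDiffAt ℝ 2 z x ∧ 0 ≤ lap z x) :
    Real.pi * τ ^ 2 * z p ≤ ∫ x in disc p τ, z x := by
  have hcp : ContinuousAt z p :=
    hc.continuousAt (mem_of_superset (disc_mem_nhds hτ) disc_subset_closedDisc)
  have hcircle : ∀ ρ ∈ Ioo 0 τ,
      0 ≤ ∫ θ in (-Real.pi)..Real.pi, ρ * (z (polarCoord.symm (ρ, θ) + p) - z p) := by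
    intro ρ hρ
    rw [intervalIntegral.integral_const_mul]
    refine mul_nonneg hρ.1.le ?_
    have := two_pi_mul_le_integral_circle (z := fun x => z x - z p) hρ.1 hρ.2 (hcp.sub_const _)
      fun x hx hxp => ⟨(hz x hx hxp).1.sub contDiffAt_const, by
        rw [lap_sub (hz x hx hxp).1 contDiffAt_const, lap_const, sub_zero]
        exact (hz x hx hxp).2⟩
    simpa only [sub_self, mul_zero] using this
  have hnonneg : 0 ≤ ∫ x in disc p τ, (z x - z p) := by
    rw [integral_disc_eq_polar (f := fun x => z x - z p) (hc.sub continuousOn_const)]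
    exact setIntegral_nonneg measurableSet_Ioo hcircle
  rw [integral_sub (g := fun _ => z p) (integrableOn_disc_of_continuousOn hc)
    (integrableOn_disc_of_continuousOn continuousOn_const), integral_disc_const hτ.le] at hnonneg
  linarith

end CircleMean

/-! ### Radial functions and the barrier at infinity -/

section Radial

variable {x : ℝ × ℝ}

lemma contDiff_nrm_sq : ContDiff ℝ 2 fun y : ℝ × ℝ => nrm y ^ 2 := by
  simp only [nrm_sq]
  fun_prop

lemma deriv_nrm_sq_fst (x : ℝ × ℝ) (s : ℝ) : deriv (fun s => nrm (s, x.2) ^ 2) s = 2 * s := by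
  simp [nrm_sq]

lemma deriv_nrm_sq_snd (x : ℝ × ℝ) (t : ℝ) : deriv (fun t => nrm (x.1, t) ^ 2) t = 2 * t := by
  simp [nrm_sq]

lemma lap_nrm_sq (x : ℝ × ℝ) : lap (fun y => nrm y ^ 2) x = 4 := by
  rw [lap, funext (deriv_nrm_sq_fst x), funext (deriv_nrm_sq_snd x)]
  simp only [deriv_const_mul_id']
  norm_num

lemma lap_comp_nrm_sq {φ φ' : ℝ → ℝ} {φ'' : ℝ}
    (hφ : ∀ᶠ r in 𝓝 (nrm x ^ 2), HasDerivAt φ (φ' r) r) (hφ' : HasDerivAt φ' φ'' (nrm x ^ 2)) :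
    lap (fun y => φ (nrm y ^ 2)) x = 4 * φ' (nrm x ^ 2) + 4 * nrm x ^ 2 * φ'' := by
  rw [lap_comp contDiff_nrm_sq.contDiffAt hφ hφ', lap_nrm_sq, deriv_nrm_sq_fst, deriv_nrm_sq_snd,
    nrm_sq]
  ring

lemma contDiffAt_log_nrm (hx : x ≠ 0) : ContDiffAt ℝ 2 (fun y => Real.log (nrm y)) x :=
  (contDiffAt_nrm hx).log (nrm_pos.2 hx).ne'

lemma log_nrm (y : ℝ × ℝ) : Real.log (nrm y) = Real.log (nrm y ^ 2) / 2 := by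
  rw [Real.log_pow]
  push_cast
  ring

lemma hasDerivAt_log_nrm_fst (hx : x ≠ 0) :
    HasDerivAt (fun s => Real.log (nrm (s, x.2))) (x.1 / nrm x ^ 2) x.1 := by
  have hpos : x.1 ^ 2 + x.2 ^ 2 ≠ 0 := nrm_sq x ▸ pow_ne_zero 2 (nrm_pos.2 hx).ne'
  simp only [log_nrm, nrm_sq]
  refine ((((hasDerivAt_pow 2 x.1).add_const (x.2 ^ 2)).log hpos).div_const 2).congr_deriv ?_
  push_cast
  ring

lemma hasDerivAt_log_nrm_snd (hx : x ≠ 0) :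
    HasDerivAt (fun t => Real.log (nrm (x.1, t))) (x.2 / nrm x ^ 2) x.2 := by
  have hpos : x.1 ^ 2 + x.2 ^ 2 ≠ 0 := nrm_sq x ▸ pow_ne_zero 2 (nrm_pos.2 hx).ne'
  simp only [log_nrm, nrm_sq]
  refine ((((hasDerivAt_pow 2 x.2).const_add (x.1 ^ 2)).log hpos).div_const 2).congr_deriv ?_
  push_cast
  ring

lemma lap_log_nrm (hx : x ≠ 0) : lap (fun y => Real.log (nrm y)) x = 0 := by
  have hpos : 0 < nrm x ^ 2 := pow_pos (nrm_pos.2 hx) 2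
  rw [funext log_nrm, lap_comp_nrm_sq (φ := fun r => Real.log r / 2)
    ((lt_mem_nhds hpos).mono fun r hr => (Real.hasDerivAt_log hr.ne').div_const 2)
    ((hasDerivAt_inv hpos.ne').div_const 2)]
  field_simp
  ring

lemma contDiffAt_nrm_rpow (hx : x ≠ 0) (s : ℝ) : ContDiffAt ℝ 2 (fun y => nrm y ^ s) x :=
  (contDiffAt_nrm hx).rpow_const_of_ne (nrm_pos.2 hx).ne'

lemma lap_nrm_rpow (hx : x ≠ 0) (s : ℝ) :
    lap (fun y => nrm y ^ s) x = s ^ 2 * nrm x ^ (s - 2) := by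
  have hnrm : 0 < nrm x := nrm_pos.2 hx
  have hpos : 0 < nrm x ^ 2 := pow_pos hnrm 2
  have hpow (a : ℝ) (y : ℝ × ℝ) : nrm y ^ (2 * a) = (nrm y ^ 2) ^ a := by
    rw [Real.rpow_mul (nrm_nonneg y), Real.rpow_two]
  have hs : (fun y => nrm y ^ s) = fun y => (nrm y ^ 2) ^ (s / 2) := by
    ext y
    rw [← hpow, mul_div_cancel₀ s two_ne_zero]
  rw [hs, lap_comp_nrm_sq (φ := fun r => r ^ (s / 2))
    ((lt_mem_nhds hpos).mono fun r hr => Real.hasDerivAt_rpow_const (Or.inl hr.ne'))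
    ((Real.hasDerivAt_rpow_const (Or.inl hpos.ne')).const_mul (s / 2)),
    show s - 2 = 2 * (s / 2 - 1) by ring, hpow, Real.rpow_sub_one hpos.ne' (s / 2 - 1)]
  field_simp
  ring

/-- The function `x₁^{1/2} |x|^{1/8}`, a strictly superharmonic barrier on the half plane `x₁ > 0`
that dominates the growth of solutions at infinity. -/
noncomputable def barrier (x : ℝ × ℝ) : ℝ := x.1 ^ (1 / 2 : ℝ) * nrm x ^ (1 / 8 : ℝ)

lemma ne_zero_of_fst_pos (hx : 0 < x.1) : x ≠ 0 := fun h => hx.ne' (congrArg Prod.fst h)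

lemma barrier_pos (hx : 0 < x.1) : 0 < barrier x :=
  mul_pos (Real.rpow_pos_of_pos hx _)
    (Real.rpow_pos_of_pos (nrm_pos.2 (ne_zero_of_fst_pos hx)) _)

lemma continuous_barrier : Continuous barrier :=
  (continuous_fst.rpow_const fun _ => Or.inr (by norm_num)).mul
    (continuous_nrm.rpow_const fun _ => Or.inr (by norm_num))

lemma contDiffAt_barrier (hx : 0 < x.1) : ContDiffAt ℝ 2 barrier x :=
  (contDiffAt_fst.rpow_const_of_ne hx.ne').mul (contDiffAt_nrm_rpow (ne_zero_of_fst_pos hx) _)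

lemma lap_log_fst (x : ℝ × ℝ) : lap (fun y => Real.log y.1) x = -(x.1 ^ 2)⁻¹ := by
  simp [lap, Real.deriv_log']

lemma barrier_eq_exp (hx : 0 < x.1) :
    barrier x = Real.exp (2⁻¹ * Real.log x.1 + 8⁻¹ * Real.log (nrm x)) := by
  rw [barrier, Real.rpow_def_of_pos hx, Real.rpow_def_of_pos (nrm_pos.2 (ne_zero_of_fst_pos hx)),
    ← Real.exp_add]
  congr 1
  ring

lemma lap_barrier (hx : 0 < x.1) :
    lap barrier x = barrier x * (9 / 64 * (nrm x ^ 2)⁻¹ - 1 / 4 * (x.1 ^ 2)⁻¹) := by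
  have hx0 := ne_zero_of_fst_pos hx
  have hnrm : 0 < nrm x := nrm_pos.2 hx0
  have hlog₁ : ContDiffAt ℝ 2 (fun y : ℝ × ℝ => 2⁻¹ * Real.log y.1) x :=
    contDiffAt_const.mul (contDiffAt_fst.log hx.ne')
  have hlog₂ : ContDiffAt ℝ 2 (fun y => 8⁻¹ * Real.log (nrm y)) x :=
    contDiffAt_const.mul (contDiffAt_log_nrm hx0)
  have hlap : lap (fun y => 2⁻¹ * Real.log y.1 + 8⁻¹ * Real.log (nrm y)) x
      = -(2⁻¹ * (x.1 ^ 2)⁻¹) := by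
    rw [lap_add hlog₁ hlog₂, lap_const_mul, lap_const_mul, lap_log_fst, lap_log_nrm hx0]
    ring
  have hfst := ((Real.hasDerivAt_log hx.ne').const_mul 2⁻¹).fun_add
    ((hasDerivAt_log_nrm_fst hx0).const_mul 8⁻¹)
  have hsnd := ((hasDerivAt_log_nrm_snd hx0).const_mul 8⁻¹).const_add (2⁻¹ * Real.log x.1)
  have hexp : barrier =ᶠ[𝓝 x] fun y =>
      Real.exp (2⁻¹ * Real.log y.1 + 8⁻¹ * Real.log (nrm y)) := by
    filter_upwards [(isOpen_lt continuous_const continuous_fst).mem_nhds hx] with y hy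
    exact barrier_eq_exp hy
  rw [lap_congr hexp, lap_comp (hlog₁.add hlog₂) (.of_forall fun r => Real.hasDerivAt_exp r)
    (Real.hasDerivAt_exp _), hlap, hfst.deriv, hsnd.deriv, barrier_eq_exp hx]
  have hsq := nrm_sq x
  field_simp
  linear_combination -(1024 * x.1 ^ 2) * hsq

lemma lap_barrier_le (hx : 0 < x.1) : lap barrier x ≤ -(7 / 64) * (barrier x / nrm x ^ 2) := by
  have hinv : (nrm x ^ 2)⁻¹ ≤ (x.1 ^ 2)⁻¹ := by
    refine inv_anti₀ (pow_pos hx 2) ?_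
    rw [nrm_sq]
    exact le_add_of_nonneg_right (sq_nonneg _)
  calc lap barrier x = barrier x * (9 / 64 * (nrm x ^ 2)⁻¹ - 1 / 4 * (x.1 ^ 2)⁻¹) := lap_barrier hx
    _ ≤ barrier x * (-(7 / 64) * (nrm x ^ 2)⁻¹) :=
        mul_le_mul_of_nonneg_left (by linarith) (barrier_pos hx).le
    _ = -(7 / 64) * (barrier x / nrm x ^ 2) := by ring

end Radial

/-! ### Minimum principles -/

section MinimumPrinciple

variable {z : ℝ × ℝ → ℝ}

lemma nonneg_of_lap_nonpos {K : Set (ℝ × ℝ)} (hK : IsCompact K) (hz : ContinuousOn z K)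
    (h : ∀ x ∈ K, 0 ≤ z x ∨ (K ∈ 𝓝 x ∧ ContDiffAt ℝ 2 z x ∧ lap z x ≤ 0)) :
    ∀ x ∈ K, 0 ≤ z x := by
  intro x hx
  obtain ⟨C, hC⟩ := hK.exists_bound_of_continuousOn (continuous_nrm.pow 2).continuousOn
  have hperturbed : ∀ ε > 0, 0 ≤ z x + ε * C := by
    intro ε hε
    have hcont : ContinuousOn (fun y => z y + -ε * nrm y ^ 2) K :=
      hz.add (continuousOn_const.mul (continuous_nrm.pow 2).continuousOn)
    obtain ⟨y, hy, hmin⟩ := hK.exists_isMinOn ⟨x, hx⟩ hcont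
    have hyx : z y + -ε * nrm y ^ 2 ≤ z x + -ε * nrm x ^ 2 := hmin hx
    have hyC : nrm y ^ 2 ≤ C := (le_abs_self _).trans (hC y hy)
    rcases h y hy with h0 | ⟨hnhds, hdiff, hlap⟩
    · nlinarith [sq_nonneg (nrm x)]
    · have hsq : ContDiffAt ℝ 2 (fun y => -ε * nrm y ^ 2) y :=
        contDiffAt_const.mul contDiff_nrm_sq.contDiffAt
      have hnonneg := lap_nonneg_of_isLocalMin (hdiff.add hsq).continuousAt (hmin.isLocalMin hnhds)
      rw [lap_add hdiff hsq, lap_const_mul, lap_nrm_sq] at hnonneg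
      linarith
  have hlim : Tendsto (fun ε => z x + ε * C) (𝓝[>] 0) (𝓝 (z x)) := by
    have : Continuous fun ε : ℝ => z x + ε * C := by fun_prop
    simpa using (this.tendsto 0).mono_left nhdsWithin_le_nhds
  exact ge_of_tendsto hlim (eventually_mem_nhdsWithin.mono hperturbed)

lemma mul_log_div_le_of_lap_nonpos {p : ℝ × ℝ} {a ρ m : ℝ} (ha : 0 < a) (haρ : a < ρ)
    (hz : ContinuousOn z (closedDisc p ρ))
    (hinner : ∀ x, nrm (x - p) = a → m ≤ z x) (houter : ∀ x, nrm (x - p) = ρ → 0 ≤ z x)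
    (hlap : ∀ x ∈ disc p ρ, a < nrm (x - p) → ContDiffAt ℝ 2 z x ∧ lap z x ≤ 0)
    {x : ℝ × ℝ} (hax : a ≤ nrm (x - p)) (hxρ : nrm (x - p) ≤ ρ) :
    m / Real.log (ρ / a) * Real.log (ρ / nrm (x - p)) ≤ z x := by
  set c := m / Real.log (ρ / a) with hc
  have hρ : 0 < ρ := ha.trans haρ
  have hlog_pos : 0 < Real.log (ρ / a) := Real.log_pos ((one_lt_div ha).2 haρ)
  let K : Set (ℝ × ℝ) := {x | a ≤ nrm (x - p)} ∩ closedDisc p ρ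
  have hK : IsCompact K :=
    isCompact_closedDisc.inter_left (isClosed_le continuous_const (continuous_nrm_sub p))
  have hlog : ContinuousOn (fun x => c * Real.log (nrm (x - p))) K :=
    continuousOn_const.mul
      ((continuous_nrm_sub p).continuousOn.log fun x hx => (ha.trans_le hx.1).ne')
  have hmin := nonneg_of_lap_nonpos hK
    (z := fun x => z x + (c * Real.log (nrm (x - p)) + -(c * Real.log ρ)))
    ((hz.mono inter_subset_right).add (hlog.add continuousOn_const)) ?_ x ⟨hax, hxρ⟩
  · rw [Real.log_div hρ.ne' (ha.trans_le hax).ne']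
    linarith
  rintro y ⟨hay, hyρ⟩
  rcases (show a ≤ nrm (y - p) from hay).eq_or_lt with hay' | hay'
  · left
    have hcm : c * (Real.log ρ - Real.log a) = m := by
      rw [← Real.log_div hρ.ne' ha.ne', hc, div_mul_cancel₀ _ hlog_pos.ne']
    rw [← hay']
    linarith [hinner y hay'.symm]
  rcases (mem_closedDisc.1 hyρ).eq_or_lt with hyρ' | hyρ'
  · left
    rw [hyρ']
    linarith [houter y hyρ']
  right
  have hyp : y - p ≠ 0 := nrm_pos.1 (ha.trans hay')
  have hlogy : ContDiffAt ℝ 2 (fun y => c * Real.log (nrm (y - p))) y :=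
    contDiffAt_const.mul ((contDiffAt_log_nrm hyp).comp y (contDiffAt_id.sub contDiffAt_const))
  obtain ⟨hzy, hlapy⟩ := hlap y hyρ' hay'
  refine ⟨?_, hzy.add (hlogy.add contDiffAt_const), ?_⟩
  · filter_upwards [isOpen_disc.mem_nhds hyρ',
      (isOpen_lt continuous_const (continuous_nrm_sub p)).mem_nhds hay'] with w hwρ hwa
    exact ⟨le_of_lt hwa, disc_subset_closedDisc hwρ⟩
  · rw [lap_add hzy (hlogy.add contDiffAt_const), lap_add hlogy contDiffAt_const, lap_const,
      lap_const_mul, lap_comp_sub_const (fun y => Real.log (nrm y)), lap_log_nrm hyp]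
    linarith

lemma exists_mul_sub_le_of_lap_nonpos {p : ℝ × ℝ} {ρ : ℝ} (hρ : 0 < ρ)
    (hz : ContinuousOn z (closedDisc p ρ)) (hpos : ∀ x ∈ disc p ρ, 0 < z x)
    (hbdry : ∀ x, nrm (x - p) = ρ → 0 ≤ z x)
    (hlap : ∀ x ∈ disc p ρ, ContDiffAt ℝ 2 z x ∧ lap z x ≤ 0) :
    ∃ c > 0, ∀ x, ρ / 2 ≤ nrm (x - p) → nrm (x - p) ≤ ρ → c * (ρ - nrm (x - p)) ≤ z x := by
  have hsub : closedDisc p (ρ / 2) ⊆ disc p ρ := fun x hx =>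
    mem_disc.2 ((mem_closedDisc.1 hx).trans_lt (half_lt_self hρ))
  obtain ⟨y, hy, hmin⟩ := isCompact_closedDisc.exists_isMinOn
    ⟨p, mem_closedDisc_self (half_pos hρ).le⟩ (hz.mono (hsub.trans disc_subset_closedDisc))
  have hlog : 0 < Real.log (ρ / (ρ / 2)) :=
    Real.log_pos ((one_lt_div (half_pos hρ)).2 (half_lt_self hρ))
  have hc : 0 < z y / Real.log (ρ / (ρ / 2)) := div_pos (hpos y (hsub hy)) hlog
  refine ⟨z y / Real.log (ρ / (ρ / 2)) / ρ, div_pos hc hρ, fun x hx₁ hx₂ => ?_⟩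
  have hr : 0 < nrm (x - p) := lt_of_lt_of_le (by positivity) hx₁
  have hlog_ge : (ρ - nrm (x - p)) / ρ ≤ Real.log (ρ / nrm (x - p)) := by
    rw [sub_div, div_self hρ.ne', ← inv_div ρ]
    exact Real.one_sub_inv_le_log_of_pos (div_pos hρ hr)
  calc _ = z y / Real.log (ρ / (ρ / 2)) * ((ρ - nrm (x - p)) / ρ) := by ring
    _ ≤ z y / Real.log (ρ / (ρ / 2)) * Real.log (ρ / nrm (x - p)) :=
        mul_le_mul_of_nonneg_left hlog_ge hc.le
    _ ≤ z x := mul_log_div_le_of_lap_nonpos (half_pos hρ) (half_lt_self hρ) hz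
        (fun w hw => hmin (mem_closedDisc.2 hw.le)) hbdry (fun w hw _ => hlap w hw) hx₁ hx₂

variable {Ω : Set (ℝ × ℝ)} {e q : ℝ × ℝ}

lemma eventually_eq_zero_of_lap_nonpos (hΩ : IsOpen Ω) (hz : ContinuousOn z Ω)
    (hnonneg : ∀ x ∈ Ω, 0 ≤ z x) (hlap : ∀ x ∈ Ω, x ≠ e → ContDiffAt ℝ 2 z x ∧ lap z x ≤ 0)
    (hq : q ∈ Ω) (hzq : z q = 0) : ∀ᶠ x in 𝓝 q, z x = 0 := by
  have hnhds : ∀ᶠ x in 𝓝 q, x ∈ Ω ∧ (x ≠ q → x ≠ e) := by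
    refine (hΩ.eventually_mem hq).and ?_
    rcases eq_or_ne q e with rfl | hqe
    · exact .of_forall fun x => id
    · exact (isOpen_ne.eventually_mem hqe).mono fun x hx _ => hx
  obtain ⟨τ, hτ, hsub⟩ := exists_closedDisc_subset hnhds
  have hsub' : disc q τ ⊆ closedDisc q τ := disc_subset_closedDisc
  have hcont : ContinuousOn z (closedDisc q τ) := hz.mono fun x hx => (hsub hx).1
  have hmean := pi_mul_sq_mul_le_integral_disc (z := fun x => -1 * z x) hτ
    (continuousOn_const.mul hcont) fun x hx hxq => by
      obtain ⟨hdiff, hle⟩ := hlap x (hsub (hsub' hx)).1 ((hsub (hsub' hx)).2 hxq)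
      refine ⟨contDiffAt_const.mul hdiff, ?_⟩
      rw [lap_const_mul]
      linarith
  have hnonneg' : ∀ x ∈ disc q τ, 0 ≤ z x := fun x hx => hnonneg x (hsub (hsub' hx)).1
  have hintegral : ∫ x in disc q τ, z x = 0 := by
    refine le_antisymm ?_ (setIntegral_nonneg isOpen_disc.measurableSet hnonneg')
    rw [hzq, integral_const_mul] at hmean
    linarith
  rw [setIntegral_eq_zero_iff_of_nonneg_ae
    ((ae_restrict_iff' isOpen_disc.measurableSet).2 (.of_forall hnonneg'))
    (integrableOn_disc_of_continuousOn hcont)] at hintegral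
  have heq := Measure.eqOn_open_of_ae_eq (μ := volume) hintegral isOpen_disc
    (hcont.mono hsub') continuousOn_const
  filter_upwards [disc_mem_nhds hτ] with x hx using heq hx

lemma eq_zero_of_lap_nonpos (hΩ : IsOpen Ω) (hconn : IsPreconnected Ω) (hz : ContinuousOn z Ω)
    (hnonneg : ∀ x ∈ Ω, 0 ≤ z x) (hlap : ∀ x ∈ Ω, x ≠ e → ContDiffAt ℝ 2 z x ∧ lap z x ≤ 0)
    (hq : q ∈ Ω) (hzq : z q = 0) : ∀ x ∈ Ω, z x = 0 := by
  have hsub := hconn.subset_of_closure_inter_subset (u := {x | ∀ᶠ y in 𝓝 x, z y = 0})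
    isOpen_setOfPred_eventually_nhds
    ⟨q, hq, eventually_eq_zero_of_lap_nonpos hΩ hz hnonneg hlap hq hzq⟩ ?_
  · exact fun x hx => (hsub hx).self_of_nhds
  rintro x ⟨hx, hxΩ⟩
  refine eventually_eq_zero_of_lap_nonpos hΩ hz hnonneg hlap hxΩ ?_
  have hfreq : ∃ᶠ y in 𝓝 x, z y = 0 :=
    (mem_closure_iff_frequently.1 hx).mono fun y hy => hy.self_of_nhds
  by_contra hne
  exact hfreq ((hz.continuousAt (hΩ.mem_nhds hxΩ)).eventually_ne hne)

end MinimumPrinciple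

/-! ### Estimates for functions with controlled Laplacian -/

section LaplacianEstimates

variable {f : ℝ × ℝ → ℝ} {p : ℝ × ℝ}

lemma contDiff_nrm_sub_sq (p : ℝ × ℝ) : ContDiff ℝ 2 fun y => nrm (y - p) ^ 2 :=
  contDiff_nrm_sq.comp (contDiff_id.sub contDiff_const)

lemma pi_mul_sq_mul_exp_le_integral_disc {τ K : ℝ} (hτ : 0 < τ) (hK : 0 ≤ K)
    (hKτ : K * τ ^ 2 ≤ 2) (hf : ContinuousOn f (closedDisc p τ))
    (hlap : ∀ x ∈ disc p τ, x ≠ p → ContDiffAt ℝ 2 f x ∧ -K ≤ lap f x) :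
    Real.pi * τ ^ 2 * Real.exp (f p) ≤ 2 * ∫ x in disc p τ, Real.exp (f x) := by
  let v : ℝ × ℝ → ℝ := fun x => f x + K / 4 * nrm (x - p) ^ 2
  have hv : ContinuousOn v (closedDisc p τ) :=
    hf.add (continuousOn_const.mul (contDiff_nrm_sub_sq p).continuous.continuousOn)
  have hmean : Real.pi * τ ^ 2 * f p ≤ ∫ x in disc p τ, v x := by
    have hvp : v p = f p := by simp [v, nrm_zero]
    rw [← hvp]
    refine pi_mul_sq_mul_le_integral_disc hτ hv fun x hx hxp => ?_
    obtain ⟨hfx, hlapx⟩ := hlap x hx hxp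
    have hsq : ContDiffAt ℝ 2 (fun x => K / 4 * nrm (x - p) ^ 2) x :=
      contDiffAt_const.mul (contDiff_nrm_sub_sq p).contDiffAt
    refine ⟨hfx.add hsq, ?_⟩
    rw [lap_add hfx hsq, lap_const_mul, lap_comp_sub_const (fun y => nrm y ^ 2), lap_nrm_sq]
    linarith
  have hpointwise : ∀ x ∈ disc p τ,
      Real.exp (f p) * (2⁻¹ - f p) + Real.exp (f p) * v x ≤ Real.exp (f x) := by
    intro x hx
    have hsq : K * nrm (x - p) ^ 2 ≤ K * τ ^ 2 :=
      mul_le_mul_of_nonneg_left (pow_le_pow_left₀ (nrm_nonneg _) hx.le 2) hK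
    calc _ = Real.exp (f p) * (2⁻¹ - f p + v x) := by ring
      _ ≤ Real.exp (f p) * (f x - f p + 1) :=
          mul_le_mul_of_nonneg_left (by simp only [v]; linarith) (Real.exp_pos _).le
      _ ≤ Real.exp (f p) * Real.exp (f x - f p) :=
          mul_le_mul_of_nonneg_left (Real.add_one_le_exp _) (Real.exp_pos _).le
      _ = Real.exp (f x) := by rw [← Real.exp_add, add_sub_cancel]
  have hconst : IntegrableOn (fun _ => Real.exp (f p) * (2⁻¹ - f p)) (disc p τ) :=
    integrableOn_disc_of_continuousOn continuousOn_const
  have hvint : IntegrableOn (fun x => Real.exp (f p) * v x) (disc p τ) :=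
    (integrableOn_disc_of_continuousOn hv).const_mul _
  have hint := setIntegral_mono_on (hconst.add hvint) (integrableOn_disc_of_continuousOn hf.rexp)
    isOpen_disc.measurableSet hpointwise
  simp only [Pi.add_apply] at hint
  rw [integral_add hconst hvint, integral_disc_const hτ.le, integral_const_mul] at hint
  nlinarith [mul_le_mul_of_nonneg_left hmean (Real.exp_pos (f p)).le]

lemma pi_mul_sq_mul_apply_zero_le {K s ρ : ℝ} (hf : Continuous f) (hs : 0 < s) (hK : 0 ≤ K)
    (hρ : 0 < ρ)
    (hlap : ∀ x ≠ 0, ContDiffAt ℝ 2 f x ∧ -(K * nrm x ^ (s - 2)) ≤ lap f x) :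
    Real.pi * ρ ^ 2 * f 0 ≤
      (∫ x in disc 0 ρ, f x) + Real.pi * ρ ^ 2 * (K / s ^ 2 * ρ ^ s) := by
  have hsum : Continuous fun x => f x + K / s ^ 2 * nrm x ^ s :=
    hf.add (continuous_const.mul (continuous_nrm.rpow_const fun _ => Or.inr hs.le))
  have hfint : IntegrableOn f (disc 0 ρ) := integrableOn_disc_of_continuousOn hf.continuousOn
  have hconst : IntegrableOn (fun _ => K / s ^ 2 * ρ ^ s) (disc 0 ρ) :=
    integrableOn_disc_of_continuousOn continuousOn_const
  have hmean := pi_mul_sq_mul_le_integral_disc (p := 0) hρ hsum.continuousOn fun x _ hx => by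
    obtain ⟨hfx, hlapx⟩ := hlap x hx
    have hpow : ContDiffAt ℝ 2 (fun x => K / s ^ 2 * nrm x ^ s) x :=
      contDiffAt_const.mul (contDiffAt_nrm_rpow hx s)
    refine ⟨hfx.add hpow, ?_⟩
    rw [lap_add hfx hpow, lap_const_mul, lap_nrm_rpow hx, ← mul_assoc,
      div_mul_cancel₀ K (by positivity)]
    linarith
  rw [nrm_zero, Real.zero_rpow hs.ne', mul_zero, add_zero] at hmean
  rw [← integral_disc_const (p := 0) hρ.le (K / s ^ 2 * ρ ^ s), ← integral_add hfint hconst]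
  refine hmean.trans (setIntegral_mono_on (integrableOn_disc_of_continuousOn hsum.continuousOn)
    (hfint.add hconst) isOpen_disc.measurableSet fun x hx => ?_)
  rw [mem_disc, sub_zero] at hx
  have := Real.rpow_le_rpow (nrm_nonneg x) hx.le hs.le
  gcongr

lemma sub_le_of_neg_mul_nrm_rpow_le_lap {C K s : ℝ} (hf : Continuous f) (hfC : ∀ x, f x ≤ C)
    (hdiff : ∀ x ≠ 0, ContDiffAt ℝ 2 f x) (hsuper : ∀ x ≠ 0, lap f x ≤ 0) (hs : 0 < s)
    (hK : 0 ≤ K) (hlap : ∀ x ≠ 0, -(K * nrm x ^ (s - 2)) ≤ lap f x) (p : ℝ × ℝ) :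
    C - f p ≤ 4 * (C - f 0 + K / s ^ 2 * (2 * nrm p) ^ s) := by
  rcases eq_or_ne p 0 with rfl | hp
  · have hpow : 0 ≤ K / s ^ 2 * (2 * nrm 0) ^ s := by
      rw [nrm_zero]
      positivity
    linarith [hfC 0]
  set ℓ := nrm p
  have hℓ : 0 < ℓ := nrm_pos.2 hp
  have h2ℓ : 0 < 2 * ℓ := by positivity
  have hfint : IntegrableOn f (disc 0 (2 * ℓ)) := integrableOn_disc_of_continuousOn hf.continuousOn
  have hconst : IntegrableOn (fun _ => C) (disc 0 (2 * ℓ)) :=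
    integrableOn_disc_of_continuousOn continuousOn_const
  have hmean_zero := pi_mul_sq_mul_apply_zero_le hf hs hK h2ℓ fun x hx => ⟨hdiff x hx, hlap x hx⟩
  have hmean_p : Real.pi * ℓ ^ 2 * (C - f p) ≤ ∫ x in disc p ℓ, (C - f x) := by
    refine pi_mul_sq_mul_le_integral_disc (z := fun x => C - f x) hℓ
      (continuous_const.sub hf).continuousOn fun x hx _ => ?_
    have hx0 : x ≠ 0 := by
      rintro rfl
      exact (mem_disc.1 hx).ne (by rw [nrm_sub_comm, sub_zero])
    refine ⟨contDiffAt_const.sub (hdiff x hx0), ?_⟩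
    rw [lap_sub contDiffAt_const (hdiff x hx0), lap_const]
    linarith [hsuper x hx0]
  have hsub : disc p ℓ ⊆ disc 0 (2 * ℓ) := fun x hx => by
    rw [mem_disc, sub_zero]
    linarith [nrm_le_nrm_add_nrm_sub x p, mem_disc.1 hx]
  have hmono : ∫ x in disc p ℓ, (C - f x) ≤ ∫ x in disc 0 (2 * ℓ), (C - f x) :=
    setIntegral_mono_set (hconst.sub hfint) (.of_forall fun x => sub_nonneg.2 (hfC x))
      hsub.eventuallyLE
  rw [integral_sub hconst hfint, integral_disc_const h2ℓ.le] at hmono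
  refine le_of_mul_le_mul_left ?_ (show 0 < Real.pi * ℓ ^ 2 by positivity)
  linarith

/-- The point-picking (doubling) argument: `y` maximises `(r - |y - x₀|)² V k y` over `k` and `y`,
and `2 σ = r - |y - x₀|`. -/
lemma exists_closedDisc_le_four_mul {ι : Type*} [Finite ι] {V : ι → ℝ × ℝ → ℝ} {x₀ : ℝ × ℝ}
    {r : ℝ} (hr : 0 < r) (hV : ∀ k, ContinuousOn (V k) (closedDisc x₀ r))
    (hnonneg : ∀ k, ∀ y ∈ closedDisc x₀ r, 0 ≤ V k y) {j : ι} (hj : 0 < V j x₀) :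
    ∃ k y, ∃ σ > 0, closedDisc y σ ⊆ closedDisc x₀ r ∧ r ^ 2 * V j x₀ ≤ 4 * (σ ^ 2 * V k y) ∧
      ∀ i, ∀ x ∈ closedDisc y σ, V i x ≤ 4 * V k y := by
  let Φ : ι → ℝ × ℝ → ℝ := fun k y => (r - nrm (y - x₀)) ^ 2 * V k y
  have hΦ (k : ι) : ContinuousOn (Φ k) (closedDisc x₀ r) :=
    ((continuous_const.sub (continuous_nrm_sub x₀)).pow 2).continuousOn.mul (hV k)
  have hx₀ : x₀ ∈ closedDisc x₀ r := mem_closedDisc_self hr.le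
  choose m hm hmax using fun k => isCompact_closedDisc.exists_isMaxOn ⟨x₀, hx₀⟩ (hΦ k)
  have : Nonempty ι := ⟨j⟩
  obtain ⟨k, hk⟩ := Finite.exists_max fun k => Φ k (m k)
  set y := m k
  have hΦ_le (i : ι) {x : ℝ × ℝ} (hx : x ∈ closedDisc x₀ r) : Φ i x ≤ Φ k y :=
    (hmax i hx).trans (hk i)
  have hΦx₀ : r ^ 2 * V j x₀ ≤ Φ k y := by
    simpa only [Φ, sub_self, nrm_zero, sub_zero] using hΦ_le j hx₀
  set σ := (r - nrm (y - x₀)) / 2 with hσ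
  have hΦσ : Φ k y = 4 * (σ ^ 2 * V k y) := by simp only [Φ, hσ]; ring
  have hσ_pos : 0 < σ := by
    have hσ_nonneg : 0 ≤ σ := div_nonneg (sub_nonneg.2 (hm k)) two_pos.le
    refine hσ_nonneg.lt_of_ne' fun h0 => ?_
    have : 0 < r ^ 2 * V j x₀ := by positivity
    rw [hΦσ, h0] at hΦx₀
    linarith
  have hdist {x : ℝ × ℝ} (hx : x ∈ closedDisc y σ) : nrm (x - x₀) ≤ r - σ := by
    have htri := nrm_add_le (x - y) (y - x₀)
    rw [sub_add_sub_cancel] at htri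
    linarith [mem_closedDisc.1 hx]
  have hsub : closedDisc y σ ⊆ closedDisc x₀ r := fun x hx =>
    (hdist hx).trans (sub_le_self r hσ_pos.le)
  refine ⟨k, y, σ, hσ_pos, hsub, hΦx₀.trans hΦσ.le, fun i x hx => ?_⟩
  refine le_of_mul_le_mul_left ?_ (pow_pos hσ_pos 2)
  calc σ ^ 2 * V i x ≤ (r - nrm (x - x₀)) ^ 2 * V i x :=
        mul_le_mul_of_nonneg_right
          (pow_le_pow_left₀ hσ_pos.le (le_sub_comm.1 (hdist hx)) 2) (hnonneg i x (hsub hx))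
    _ ≤ Φ k y := hΦ_le i (hsub hx)
    _ = σ ^ 2 * (4 * V k y) := by rw [hΦσ]; ring

end LaplacianEstimates

/-! ### Estimates at infinity for solutions of the system -/

/-- The nonlinearity `|x|^b e^{f(x)}` of the Liouville system. -/
noncomputable def density (b : ℝ) (f : ℝ × ℝ → ℝ) (x : ℝ × ℝ) : ℝ := nrm x ^ b * Real.exp (f x)

section Density

variable {b : ℝ} {f : ℝ × ℝ → ℝ} {p x : ℝ × ℝ}

lemma density_nonneg : 0 ≤ density b f x :=
  mul_nonneg (Real.rpow_nonneg (nrm_nonneg x) _) (Real.exp_pos _).le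

lemma density_pos (hx : x ≠ 0) : 0 < density b f x :=
  mul_pos (Real.rpow_pos_of_pos (nrm_pos.2 hx) _) (Real.exp_pos _)

lemma continuousAt_density (hf : Continuous f) (hx : x ≠ 0) : ContinuousAt (density b f) x :=
  (continuous_nrm.continuousAt.rpow_const (Or.inl (nrm_pos.2 hx).ne')).mul hf.continuousAt.rexp

lemma rpow_le_nine_mul_rpow {r s t : ℝ} (hr : 0 < r) (hrs : r ≤ s) (ht : 0 < t) (htr : t ≤ 3 * r)
    (hb : -2 ≤ b) (hb0 : b ≤ 0) : s ^ b ≤ 9 * t ^ b := by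
  have h3 : (1 : ℝ) ≤ 9 * 3 ^ b := by
    have h := Real.rpow_le_rpow_of_exponent_le (show (1 : ℝ) ≤ 3 by norm_num) hb
    rw [Real.rpow_neg (by norm_num), Real.rpow_two] at h
    linarith
  have hrb : 0 ≤ r ^ b := Real.rpow_nonneg hr.le b
  calc s ^ b ≤ r ^ b := Real.rpow_le_rpow_of_nonpos hr hrs hb0
    _ ≤ 9 * 3 ^ b * r ^ b := le_mul_of_one_le_left hrb h3
    _ = 9 * (3 * r) ^ b := by rw [Real.mul_rpow (by norm_num) hr.le, mul_assoc]
    _ ≤ 9 * t ^ b :=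
        mul_le_mul_of_nonneg_left (Real.rpow_le_rpow_of_nonpos ht htr hb0) (by norm_num)

lemma nrm_mem_Icc_of_mem_closedDisc {r : ℝ} (hp : nrm p = 2 * r) (hx : x ∈ closedDisc p r) :
    nrm x ∈ Icc r (3 * r) := by
  have hpx := nrm_le_nrm_add_nrm_sub p x
  have hxp := nrm_le_nrm_add_nrm_sub x p
  rw [nrm_sub_comm] at hpx
  rw [mem_closedDisc] at hx
  constructor <;> linarith

lemma pi_mul_sq_mul_density_le_integral_disc {r τ K : ℝ} (hr : 0 < r) (hτ : 0 < τ) (hK : 0 ≤ K)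
    (hKτ : K * τ ^ 2 ≤ 2) (hf : Continuous f) (hb : -2 ≤ b) (hb0 : b ≤ 0)
    (hannulus : ∀ x ∈ closedDisc p τ, r ≤ nrm x ∧ nrm x ≤ 3 * r)
    (hlap : ∀ x ∈ closedDisc p τ, ContDiffAt ℝ 2 f x ∧ -K ≤ lap f x) :
    Real.pi * τ ^ 2 * density b f p ≤ 18 * ∫ x in disc p τ, density b f x := by
  have hsub : disc p τ ⊆ closedDisc p τ := disc_subset_closedDisc
  have hp : p ∈ closedDisc p τ := mem_closedDisc_self hτ.le
  have hpos {x : ℝ × ℝ} (hx : x ∈ closedDisc p τ) : 0 < nrm x := hr.trans_le (hannulus x hx).1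
  have hexp := pi_mul_sq_mul_exp_le_integral_disc hτ hK hKτ hf.continuousOn
    fun x hx _ => hlap x (hsub hx)
  have hdensity : IntegrableOn (density b f) (disc p τ) :=
    integrableOn_disc_of_continuousOn fun x hx =>
      (continuousAt_density hf (nrm_pos.1 (hpos hx))).continuousWithinAt
  have hexp_int : IntegrableOn (fun x => Real.exp (f x)) (disc p τ) :=
    integrableOn_disc_of_continuousOn hf.rexp.continuousOn
  have hmono :
      ∫ x in disc p τ, nrm p ^ b * Real.exp (f x) ≤ ∫ x in disc p τ, 9 * density b f x := by
    refine setIntegral_mono_on (hexp_int.const_mul _) (hdensity.const_mul 9)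
      isOpen_disc.measurableSet fun x hx => ?_
    have hrpow := rpow_le_nine_mul_rpow hr (hannulus p hp).1 (hpos (hsub hx))
      (hannulus x (hsub hx)).2 hb hb0
    rw [density, ← mul_assoc]
    exact mul_le_mul_of_nonneg_right hrpow (Real.exp_pos _).le
  rw [integral_const_mul, integral_const_mul] at hmono
  calc Real.pi * τ ^ 2 * density b f p
      = nrm p ^ b * (Real.pi * τ ^ 2 * Real.exp (f p)) := by rw [density]; ring
    _ ≤ nrm p ^ b * (2 * ∫ x in disc p τ, Real.exp (f x)) :=
        mul_le_mul_of_nonneg_left hexp (Real.rpow_nonneg (nrm_nonneg p) b)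
    _ ≤ 18 * ∫ x in disc p τ, density b f x := by linarith

lemma exists_setIntegral_le_of_integrable {ι : Type*} [Finite ι] {V : ι → ℝ × ℝ → ℝ}
    (hV : ∀ i, Integrable (V i)) {ε : ℝ} (hε : 0 < ε) :
    ∃ ρ > 0, ∀ i, ∫ x in {x | ρ ≤ nrm x}, V i x ≤ ε := by
  have htail (i : ι) : ∀ᶠ k : ℕ in atTop, ∫ x in {x | (k : ℝ) ≤ nrm x}, V i x ≤ ε := by
    have hlim := tendsto_setIntegral_of_antitone (μ := volume) (f := V i)
      (s := fun k : ℕ => {x | (k : ℝ) ≤ nrm x})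
      (fun k => (isClosed_le continuous_const continuous_nrm).measurableSet)
      (fun a b hab x (hx : (b : ℝ) ≤ nrm x) => show (a : ℝ) ≤ nrm x from
        (Nat.cast_le.2 hab).trans hx) ⟨0, (hV i).integrableOn⟩
    have hempty : ⋂ k : ℕ, {x : ℝ × ℝ | (k : ℝ) ≤ nrm x} = ∅ :=
      eq_empty_of_forall_notMem fun x hx =>
        let ⟨k, hk⟩ := exists_nat_gt (nrm x)
        hk.not_ge (mem_iInter.1 hx k)
    rw [hempty, setIntegral_empty] at hlim
    exact (hlim.eventually_lt_const hε).mono fun k hk => hk.le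
  obtain ⟨k, hk, hk1⟩ := ((eventually_all.2 htail).and (eventually_gt_atTop 0)).exists
  exact ⟨k, Nat.cast_pos.2 hk1, hk⟩

end Density

section System

variable {n : ℕ} {A : Matrix (Fin n) (Fin n) ℝ} {β : Fin n → ℝ} {u : Fin n → ℝ × ℝ → ℝ}

lemma exists_pos_sum_row_le (A : Matrix (Fin n) (Fin n) ℝ) : ∃ K > 0, ∀ i, ∑ j, A i j ≤ K := by
  obtain ⟨K, hK⟩ := Finite.exists_le fun i => ∑ j, A i j
  exact ⟨max K 1, by positivity, fun i => (hK i).trans (le_max_left K 1)⟩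

namespace PDESolution

lemma lap_eq (hu : PDESolution A β u) (i : Fin n) {x : ℝ × ℝ} (hx : x ≠ 0) :
    lap (u i) x = -∑ j, A i j * density (β j) (u j) x := by
  simpa only [density, ← mul_assoc] using eq_neg_of_add_eq_zero_left (hu.2.2.1 i x hx)

lemma lap_nonpos (hA : ∀ i j, 0 ≤ A i j) (hu : PDESolution A β u) (i : Fin n) {x : ℝ × ℝ}
    (hx : x ≠ 0) : lap (u i) x ≤ 0 := by
  rw [hu.lap_eq i hx]
  exact neg_nonpos.2 (Finset.sum_nonneg fun j _ => mul_nonneg (hA i j) density_nonneg)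

lemma neg_mul_le_lap (hA : ∀ i j, 0 ≤ A i j) {K M : ℝ} (hK : ∀ i, ∑ j, A i j ≤ K)
    (hu : PDESolution A β u) (i : Fin n) {x : ℝ × ℝ} (hx : x ≠ 0)
    (hM : ∀ j, density (β j) (u j) x ≤ M) : -(K * M) ≤ lap (u i) x := by
  rw [hu.lap_eq i hx, neg_le_neg_iff]
  calc ∑ j, A i j * density (β j) (u j) x ≤ ∑ j, A i j * M :=
        Finset.sum_le_sum fun j _ => mul_le_mul_of_nonneg_left (hM j) (hA i j)
    _ = (∑ j, A i j) * M := (Finset.sum_mul ..).symm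
    _ ≤ K * M := mul_le_mul_of_nonneg_right (hK i) (density_nonneg.trans (hM i))

lemma min_sq_mul_density_le (hA : ∀ i j, 0 ≤ A i j) {K : ℝ} (hK0 : 0 < K)
    (hK : ∀ i, ∑ j, A i j ≤ K) (hu : PDESolution A β u) {k : Fin n} (hβ : -2 ≤ β k)
    (hβ' : β k ≤ 0) {y : ℝ × ℝ} {r σ : ℝ} (hr : 0 < r) (hσ : 0 < σ)
    (hannulus : ∀ x ∈ closedDisc y σ, r ≤ nrm x ∧ nrm x ≤ 3 * r)
    (hmax : ∀ i, ∀ x ∈ closedDisc y σ, density (β i) (u i) x ≤ 4 * density (β k) (u k) y) :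
    min (σ ^ 2 * density (β k) (u k) y) (1 / (2 * K)) ≤
      6 * ∫ x in disc y σ, density (β k) (u k) x := by
  have hne {x : ℝ × ℝ} (hx : x ∈ closedDisc y σ) : x ≠ 0 :=
    nrm_pos.1 (hr.trans_le (hannulus x hx).1)
  set W := density (β k) (u k) y with hW
  have hW_pos : 0 < W := density_pos (hne (mem_closedDisc_self hσ.le))
  set t := min (σ ^ 2) (1 / (2 * K * W)) with ht
  have ht_pos : 0 < t := by positivity
  set τ := √t
  have hτ_pos : 0 < τ := Real.sqrt_pos.2 ht_pos
  have hτ_sq : τ ^ 2 = t := Real.sq_sqrt ht_pos.le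
  have hτσ : τ ≤ σ := Real.sqrt_le_iff.2 ⟨hσ.le, min_le_left _ _⟩
  have hsub : closedDisc y τ ⊆ closedDisc y σ := fun x hx => (mem_closedDisc.1 hx).trans hτσ
  have hKτ : K * (4 * W) * τ ^ 2 ≤ 2 := by
    rw [hτ_sq]
    calc K * (4 * W) * t ≤ K * (4 * W) * (1 / (2 * K * W)) :=
          mul_le_mul_of_nonneg_left (min_le_right _ _) (by positivity)
      _ = 2 := by field_simp; norm_num
  have hmean := pi_mul_sq_mul_density_le_integral_disc hr hτ_pos (by positivity) hKτ (hu.1 k)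
    hβ hβ' (fun x hx => hannulus x (hsub hx)) fun x hx =>
      ⟨hu.2.1 k x (hne (hsub hx)),
        hu.neg_mul_le_lap hA hK k (hne (hsub hx)) fun i => hmax i x (hsub hx)⟩
  have hmono : ∫ x in disc y τ, density (β k) (u k) x ≤ ∫ x in disc y σ, density (β k) (u k) x :=
    setIntegral_mono_set (hu.2.2.2 k).integrableOn (.of_forall fun _ => density_nonneg)
      (LE.le.eventuallyLE fun x hx => (mem_disc.1 hx).trans_le hτσ)
  have htW : t * W = min (σ ^ 2 * W) (1 / (2 * K)) := by
    rw [ht, min_mul_of_nonneg _ _ hW_pos.le]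
    congr 1
    field_simp
  have hpi : 3 * (t * W) ≤ Real.pi * (t * W) :=
    mul_le_mul_of_nonneg_right Real.pi_gt_three.le (by positivity)
  rw [← hW, hτ_sq] at hmean
  rw [← htW]
  linarith

lemma exists_sq_mul_density_le (hA : ∀ i j, 0 ≤ A i j) (hβ : ∀ i, -2 ≤ β i)
    (hβ' : ∀ i, β i ≤ 0) (hu : PDESolution A β u) {η : ℝ} (hη : 0 < η) :
    ∃ ρ > 0, ∀ x, ρ ≤ nrm x → ∀ j, nrm x ^ 2 * density (β j) (u j) x ≤ η := by
  obtain ⟨K, hK0, hK⟩ := exists_pos_sum_row_le A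
  set ε := min (η / 96) (1 / (24 * K))
  obtain ⟨ρ, hρ, htail⟩ := exists_setIntegral_le_of_integrable hu.2.2.2 (ε := ε) (by positivity)
  refine ⟨2 * ρ, by positivity, fun x₀ hx₀ j => ?_⟩
  obtain ⟨r, hr⟩ : ∃ r, nrm x₀ = 2 * r := ⟨nrm x₀ / 2, by ring⟩
  have hρr : ρ ≤ r := by linarith
  have hr_pos : 0 < r := hρ.trans_le hρr
  have hannulus (x : ℝ × ℝ) (hx : x ∈ closedDisc x₀ r) : r ≤ nrm x ∧ nrm x ≤ 3 * r :=
    nrm_mem_Icc_of_mem_closedDisc hr hx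
  have hne {x : ℝ × ℝ} (hx : x ∈ closedDisc x₀ r) : x ≠ 0 :=
    nrm_pos.1 (hr_pos.trans_le (hannulus x hx).1)
  obtain ⟨k, y, σ, hσ, hsub, hle, hmax⟩ := exists_closedDisc_le_four_mul
    (V := fun i => density (β i) (u i)) (j := j) hr_pos
    (fun k x hx => (continuousAt_density (hu.1 k) (hne hx)).continuousWithinAt)
    (fun _ _ _ => density_nonneg) (density_pos (hne (mem_closedDisc_self hr_pos.le)))
  have hsmall := hu.min_sq_mul_density_le hA hK0 hK (hβ k) (hβ' k) hr_pos hσ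
    (fun x hx => hannulus x (hsub hx)) hmax
  have hint : ∫ x in disc y σ, density (β k) (u k) x ≤ ε := by
    refine (setIntegral_mono_set (hu.2.2.2 k).integrableOn (.of_forall fun _ => density_nonneg)
      (LE.le.eventuallyLE fun x hx => ?_)).trans (htail k)
    exact hρr.trans (hannulus x (hsub (disc_subset_closedDisc hx))).1
  have hεη : ε ≤ η / 96 := min_le_left _ _
  have hεK : 6 * ε < 1 / (2 * K) := by
    have h : 6 * ε ≤ 6 * (1 / (24 * K)) := by gcongr; exact min_le_right _ _
    exact h.trans_lt (by field_simp; norm_num)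
  rcases min_le_iff.1 (hsmall.trans (by linarith : _ ≤ 6 * ε)) with h | h
  · rw [hr]
    linarith
  · exact absurd h hεK.not_ge

lemma exists_forall_le (hA : ∀ i j, 0 ≤ A i j) (hβ : ∀ i, -2 ≤ β i) (hβ' : ∀ i, β i ≤ 0)
    (hu : PDESolution A β u) : ∃ C, ∀ i x, u i x ≤ C := by
  obtain ⟨ρ, -, hdensity⟩ := hu.exists_sq_mul_density_le hA hβ hβ' one_pos
  choose C hC using fun i =>
    (isCompact_closedDisc (p := 0) (r := max ρ 1)).exists_bound_of_continuousOn
      (hu.1 i).continuousOn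
  obtain ⟨M, hM⟩ := Finite.exists_le C
  refine ⟨max M 0, fun i x => ?_⟩
  rcases le_or_gt (nrm x) (max ρ 1) with hx | hx
  · exact ((le_abs_self _).trans (hC i x (by rwa [mem_closedDisc, sub_zero]))).trans
      ((hM i).trans (le_max_left M 0))
  refine le_max_of_le_right (Real.exp_le_one_iff.1 ?_)
  have hx1 : 1 < nrm x := (le_max_right ρ 1).trans_lt hx
  have hx0 : 0 < nrm x := one_pos.trans hx1
  have hpow : 1 ≤ nrm x ^ 2 * nrm x ^ β i := by
    rw [← Real.rpow_two, ← Real.rpow_add hx0]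
    exact Real.one_le_rpow hx1.le (by linarith [hβ i])
  calc Real.exp (u i x) ≤ nrm x ^ 2 * nrm x ^ β i * Real.exp (u i x) :=
        le_mul_of_one_le_left (Real.exp_pos _).le hpow
    _ ≤ 1 := by
        rw [mul_assoc]
        exact hdensity x ((le_max_left ρ 1).trans hx.le) i

lemma exists_density_le_rpow (hA : ∀ i j, 0 ≤ A i j) (hβ : ∀ i, -2 ≤ β i) (hβ' : ∀ i, β i ≤ 0)
    (hu : PDESolution A β u) {s : ℝ} (hs : 0 ≤ s) (hsβ : ∀ j, s ≤ 2 + β j) :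
    ∃ C ≥ 0, ∀ j, ∀ x ≠ 0, density (β j) (u j) x ≤ C * nrm x ^ (s - 2) := by
  obtain ⟨C, hC⟩ := hu.exists_forall_le hA hβ hβ'
  obtain ⟨ρ, -, hdensity⟩ := hu.exists_sq_mul_density_le hA hβ hβ' one_pos
  set R := max ρ 1
  have hR1 : 1 ≤ R := le_max_right ρ 1
  refine ⟨max 1 (R ^ 2 * Real.exp C), by positivity, fun j x hx => ?_⟩
  have hx0 : 0 < nrm x := nrm_pos.2 hx
  have hpow : 0 ≤ nrm x ^ (s - 2) := Real.rpow_nonneg hx0.le _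
  rcases le_total R (nrm x) with hRx | hxR
  · have hpow_eq : nrm x ^ 2 * nrm x ^ (s - 2) = nrm x ^ s := by
      rw [← Real.rpow_two, ← Real.rpow_add hx0, add_sub_cancel]
    have hle : density (β j) (u j) x ≤ nrm x ^ (s - 2) := by
      refine le_of_mul_le_mul_left ?_ (pow_pos hx0 2)
      rw [hpow_eq]
      exact (hdensity x ((le_max_left ρ 1).trans hRx) j).trans
        (Real.one_le_rpow (hR1.trans hRx) hs)
    exact hle.trans (le_mul_of_one_le_left hpow (le_max_left _ _))
  · have hpow_le : nrm x ^ (2 + β j - s) ≤ R ^ 2 :=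
      calc nrm x ^ (2 + β j - s) ≤ R ^ (2 + β j - s) :=
            Real.rpow_le_rpow hx0.le hxR (sub_nonneg.2 (hsβ j))
        _ ≤ R ^ (2 : ℝ) := Real.rpow_le_rpow_of_exponent_le hR1 (by linarith [hβ' j])
        _ = R ^ 2 := Real.rpow_two R
    calc density (β j) (u j) x
        = nrm x ^ (2 + β j - s) * Real.exp (u j x) * nrm x ^ (s - 2) := by
          rw [density, mul_right_comm, ← Real.rpow_add hx0]
          ring_nf
      _ ≤ R ^ 2 * Real.exp C * nrm x ^ (s - 2) := by
          gcongr
          exact hC j x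
      _ ≤ max 1 (R ^ 2 * Real.exp C) * nrm x ^ (s - 2) :=
          mul_le_mul_of_nonneg_right (le_max_right _ _) hpow

lemma exists_neg_mul_one_add_rpow_le (hA : ∀ i j, 0 ≤ A i j) (hβ : ∀ i, -2 ≤ β i)
    (hβ' : ∀ i, β i ≤ 0) (hu : PDESolution A β u) {s : ℝ} (hs : 0 < s)
    (hsβ : ∀ j, s ≤ 2 + β j) : ∃ C ≥ 0, ∀ i x, -(C * (1 + nrm x ^ s)) ≤ u i x := by
  obtain ⟨K, hK0, hK⟩ := exists_pos_sum_row_le A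
  obtain ⟨C, hC⟩ := hu.exists_forall_le hA hβ hβ'
  obtain ⟨D, hD0, hD⟩ := hu.exists_density_le_rpow hA hβ hβ' hs.le hsβ
  obtain ⟨M, hM⟩ := Finite.exists_le fun i => -u i 0
  set a := 4 * |C| + 4 * |M|
  set b := 4 * (K * D / s ^ 2 * 2 ^ s)
  refine ⟨a + |C| + b, by positivity, fun i x => ?_⟩
  have hsub := sub_le_of_neg_mul_nrm_rpow_le_lap (K := K * D) (hu.1 i) (hC i)
    (fun x hx => hu.2.1 i x hx) (fun x hx => hu.lap_nonpos hA i hx) hs (by positivity)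
    (fun x hx => by
      rw [mul_assoc]
      exact hu.neg_mul_le_lap hA hK i hx fun j => hD j x hx) x
  rw [Real.mul_rpow two_pos.le (nrm_nonneg x), ← mul_assoc] at hsub
  have hpow : 0 ≤ nrm x ^ s := Real.rpow_nonneg (nrm_nonneg x) s
  have hcross : 0 ≤ (a + |C|) * nrm x ^ s := by positivity
  have hb0 : 0 ≤ b := by positivity
  linarith [hM i, le_abs_self C, neg_abs_le C, le_abs_self M]

end PDESolution

end System

/-! ### Comparison with the reflected solution -/

/-- The difference `w^l(x) = f(x^l) - f(x)` of the method of moving planes, where `x^l` is the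
reflection of `x` across the line `x₁ = l`. -/
def reflDiff (f : ℝ × ℝ → ℝ) (l : ℝ) (x : ℝ × ℝ) : ℝ := f (reflection l x) - f x

section Reflection

variable {f : ℝ × ℝ → ℝ} {l : ℝ} {x : ℝ × ℝ}

lemma reflection_of_fst_eq (hx : x.1 = l) : reflection l x = x :=
  Prod.ext (by simp only [reflection]; linarith) rfl

lemma reflection_ne_zero (hx : x ≠ (2 * l, 0)) : reflection l x ≠ 0 := fun h =>
  hx (Prod.ext (sub_eq_zero.1 (congrArg Prod.fst h)).symm
    (congrArg Prod.snd h : (reflection l x).2 = 0))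

lemma nrm_reflection_lt (hl : 0 < l) (hx : l < x.1) : nrm (reflection l x) < nrm x := by
  refine lt_of_pow_lt_pow_left₀ 2 (nrm_nonneg x) ?_
  simp only [nrm_sq, reflection]
  nlinarith

lemma nrm_reflection_le (hl : 0 < l) (hx : l ≤ x.1) : nrm (reflection l x) ≤ nrm x := by
  rcases hx.lt_or_eq with hx | hx
  · exact (nrm_reflection_lt hl hx).le
  · rw [reflection_of_fst_eq hx.symm]

lemma contDiff_reflection (l : ℝ) : ContDiff ℝ 2 (reflection l) := by
  unfold reflection
  fun_prop

lemma reflDiff_of_fst_eq (hx : x.1 = l) : reflDiff f l x = 0 := by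
  rw [reflDiff, reflection_of_fst_eq hx, sub_self]

lemma continuous_uncurry_reflDiff (hf : Continuous f) :
    Continuous fun z : ℝ × ℝ × ℝ => reflDiff f z.1 z.2 := by
  unfold reflDiff reflection
  fun_prop

lemma continuous_reflDiff (hf : Continuous f) (l : ℝ) : Continuous (reflDiff f l) :=
  (continuous_uncurry_reflDiff hf).comp (Continuous.prodMk_right l)

lemma contDiffAt_reflDiff (hf : ContDiffAt ℝ 2 f x) (hf' : ContDiffAt ℝ 2 f (reflection l x)) :
    ContDiffAt ℝ 2 (reflDiff f l) x :=
  (hf'.comp x (contDiff_reflection l).contDiffAt).sub hf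

lemma lap_reflDiff (hf : ContDiffAt ℝ 2 f x) (hf' : ContDiffAt ℝ 2 f (reflection l x)) :
    lap (reflDiff f l) x = reflDiff (lap f) l x :=
  (lap_sub (hf'.comp x (contDiff_reflection l).contDiffAt) hf).trans
    (congrArg (· - lap f x) (lap_comp_reflection f l x))

variable {b : ℝ}

lemma density_mul_reflDiff_le (hb : b ≤ 0) (hl : 0 < l) (hx : l < x.1) (he : x ≠ (2 * l, 0)) :
    density b f x * reflDiff f l x ≤ reflDiff (density b f) l x := by
  have hpow : nrm x ^ b ≤ nrm (reflection l x) ^ b :=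
    Real.rpow_le_rpow_of_nonpos (nrm_pos.2 (reflection_ne_zero he)) (nrm_reflection_lt hl hx).le hb
  have hexp := Real.add_one_le_exp (reflDiff f l x)
  change _ ≤ density b f (reflection l x) - density b f x
  rw [le_sub_iff_add_le]
  calc density b f x * reflDiff f l x + density b f x
      = density b f x * (reflDiff f l x + 1) := by ring
    _ ≤ density b f x * Real.exp (reflDiff f l x) :=
        mul_le_mul_of_nonneg_left hexp density_nonneg
    _ = nrm x ^ b * Real.exp (f (reflection l x)) := by
        rw [density, mul_assoc, ← Real.exp_add, reflDiff, add_sub_cancel]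
    _ ≤ density b f (reflection l x) := mul_le_mul_of_nonneg_right hpow (Real.exp_pos _).le

lemma eq_zero_of_reflDiff_density_eq_zero (hb : b ≤ 0) (hl : 0 < l) (hx : l < x.1)
    (he : x ≠ (2 * l, 0)) (hf : 0 ≤ reflDiff f l x) (hdensity : reflDiff (density b f) l x = 0) :
    reflDiff f l x = 0 ∧ b = 0 := by
  have hx0 : x ≠ 0 := ne_zero_of_fst_pos (hl.trans hx)
  have hzero : reflDiff f l x = 0 :=
    hf.antisymm' <| nonpos_of_mul_nonpos_right
      ((density_mul_reflDiff_le hb hl hx he).trans_eq hdensity) (density_pos hx0)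
  refine ⟨hzero, hb.eq_of_not_lt fun hb => ?_⟩
  have hpow : nrm x ^ b < nrm (reflection l x) ^ b :=
    Real.rpow_lt_rpow_of_neg (nrm_pos.2 (reflection_ne_zero he)) (nrm_reflection_lt hl hx) hb
  have hlt : density b f x < density b f (reflection l x) := by
    rw [density, density, sub_eq_zero.1 hzero]
    exact mul_lt_mul_of_pos_right hpow (Real.exp_pos _)
  exact (sub_pos.2 hlt).ne' hdensity

lemma rpow_mul_rpow_le_barrier (hl : 0 < l) (hx : l ≤ x.1) :
    l ^ (1 / 2 : ℝ) * nrm x ^ (1 / 8 : ℝ) ≤ barrier x :=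
  mul_le_mul_of_nonneg_right (Real.rpow_le_rpow hl.le hx (by norm_num))
    (Real.rpow_nonneg (nrm_nonneg x) _)

end Reflection

section Comparison

lemma tendsto_nrm_cocompact : Tendsto nrm (cocompact (ℝ × ℝ)) atTop :=
  tendsto_atTop_mono norm_le_nrm tendsto_norm_cocompact_atTop

lemma eventually_add_rpow_lt_mul_rpow {r s c : ℝ} (hs : 0 < s) (hsr : s < r) (hc : 0 < c)
    (C D : ℝ) : ∀ᶠ t : ℝ in atTop, D + C * t ^ s < c * t ^ r := by
  have hlim : Tendsto (fun t : ℝ => t ^ s * (c * t ^ (r - s) - C)) atTop atTop :=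
    (tendsto_rpow_atTop hs).atTop_mul_atTop₀ <| tendsto_atTop_add_const_right _ (-C) <|
      (tendsto_rpow_atTop (sub_pos.2 hsr)).const_mul_atTop hc
  filter_upwards [hlim.eventually_gt_atTop D, eventually_gt_atTop 0] with t ht ht0
  have hpow : t ^ r = t ^ s * t ^ (r - s) := by rw [← Real.rpow_add ht0, add_sub_cancel]
  rw [hpow]
  linarith

lemma eventually_neg_mul_barrier_lt_reflDiff {f : ℝ × ℝ → ℝ} {l s C M q : ℝ} (hl : 0 < l)
    (hs : 0 < s) (hs' : s < 1 / 8) (hC : 0 ≤ C) (hlower : ∀ x, -(C * (1 + nrm x ^ s)) ≤ f x)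
    (hupper : ∀ x, f x ≤ M) (hq : 0 < q) :
    ∀ᶠ x in cocompact (ℝ × ℝ), l ≤ x.1 → -(q * barrier x) < reflDiff f l x := by
  have hc : 0 < q * l ^ (1 / 2 : ℝ) := mul_pos hq (Real.rpow_pos_of_pos hl _)
  filter_upwards [tendsto_nrm_cocompact.eventually
    (eventually_add_rpow_lt_mul_rpow hs hs' hc C (M + C))] with x hgrowth hx
  have hrefl : C * nrm (reflection l x) ^ s ≤ C * nrm x ^ s :=
    mul_le_mul_of_nonneg_left
      (Real.rpow_le_rpow (nrm_nonneg _) (nrm_reflection_le hl hx) hs.le) hC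
  have hbarrier := mul_le_mul_of_nonneg_left (rpow_mul_rpow_le_barrier hl hx) hq.le
  have hlow := hlower (reflection l x)
  have hupp := hupper x
  rw [reflDiff]
  linarith

lemma exists_touching {ι X : Type*} [Finite ι] [TopologicalSpace X] {s : Set X} (hs : IsClosed s)
    {w : ι → X → ℝ} {g : X → ℝ} (hw : ∀ i, ContinuousOn (w i) s) (hg : ContinuousOn g s)
    (hpos : ∀ x ∈ s, 0 < g x)
    (hdecay : ∀ q > 0, ∀ᶠ x in cocompact X ⊓ 𝓟 s, ∀ i, -(q * g x) < w i x)
    (hneg : ∃ i, ∃ x ∈ s, w i x < 0) :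
    ∃ m > 0, (∀ i, ∀ x ∈ s, 0 ≤ w i x + m * g x) ∧ ∃ i, ∃ y ∈ s, w i y + m * g y = 0 := by
  obtain ⟨i₀, x₀, hx₀, hneg⟩ := hneg
  have : Fintype ι := Fintype.ofFinite ι
  have hne : (Finset.univ : Finset ι).Nonempty := ⟨i₀, Finset.mem_univ i₀⟩
  set F : X → ℝ := fun x => Finset.univ.inf' hne fun i => w i x / g x
  have hF_le (i : ι) (x : X) : F x ≤ w i x / g x := Finset.inf'_le _ (Finset.mem_univ i)
  have hF : ContinuousOn F s := ContinuousOn.finset_inf'_apply hne fun i _ =>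
    (hw i).div hg fun x hx => (hpos x hx).ne'
  have hF₀ : F x₀ < 0 := (hF_le i₀ x₀).trans_lt (div_neg_of_neg_of_pos hneg (hpos x₀ hx₀))
  have hcoercive : ∀ᶠ x in cocompact X ⊓ 𝓟 s, F x₀ ≤ F x := by
    filter_upwards [hdecay _ (neg_pos.2 hF₀), mem_inf_of_right (mem_principal_self s)]
      with x hx hxs
    refine Finset.le_inf' hne _ fun i _ => (le_div_iff₀ (hpos x hxs)).2 ?_
    linarith [hx i]
  obtain ⟨y, hy, hmin⟩ := hF.exists_isMinOn' hs hx₀ hcoercive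
  obtain ⟨i, -, hi⟩ := Finset.exists_mem_eq_inf' hne fun i => w i y / g y
  refine ⟨-F y, neg_pos.2 ((hmin hx₀).trans_lt hF₀), fun j x hx => ?_, i, y, hy, ?_⟩
  · have hle := (le_div_iff₀ (hpos x hx)).1 ((hmin hx).trans (hF_le j x))
    linarith
  · have heq : w i y / g y = F y := hi.symm
    rw [← heq, neg_mul, div_mul_cancel₀ _ (hpos y hy).ne', add_neg_cancel]

lemma pos_of_lap_neg {Ω : Set (ℝ × ℝ)} {z : ℝ × ℝ → ℝ} {e x : ℝ × ℝ} (hΩ : IsOpen Ω)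
    (hz : ContinuousOn z Ω) (hnonneg : ∀ x ∈ Ω, 0 ≤ z x)
    (hlap : ∀ x ∈ Ω, x ≠ e → ContDiffAt ℝ 2 z x ∧ lap z x < 0) (hx : x ∈ Ω) : 0 < z x := by
  refine (hnonneg x hx).lt_of_ne' fun hzx => ?_
  have hzero : ∀ᶠ y in 𝓝 x, z y = 0 := eventually_eq_zero_of_lap_nonpos hΩ hz hnonneg
    (fun y hy he => (hlap y hy he).imp_right le_of_lt) hx hzx
  have hnear : ∀ᶠ y in 𝓝[≠] x, (y ∈ Ω ∧ ∀ᶠ y' in 𝓝 y, z y' = 0) ∧ y ≠ e :=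
    (((hΩ.eventually_mem hx).and hzero.eventually_nhds).filter_mono nhdsWithin_le_nhds).and
      (nhdsNE_le_cofinite x (eventually_cofinite_ne e))
  obtain ⟨y, ⟨hyΩ, hzy⟩, hye⟩ := hnear.exists
  have hlapy : lap z y = 0 := by rw [lap_congr (g := fun _ => 0) hzy, lap_const]
  exact (hlap y hyΩ hye).2.ne hlapy

end Comparison

section System

variable {n : ℕ} {A : Matrix (Fin n) (Fin n) ℝ} {β : Fin n → ℝ} {u : Fin n → ℝ × ℝ → ℝ}

namespace PDESolution

section Comparison

variable {l : ℝ} {x : ℝ × ℝ}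

lemma contDiffAt_reflDiff (hu : PDESolution A β u) (i : Fin n) (hx : x ≠ 0)
    (he : x ≠ (2 * l, 0)) : ContDiffAt ℝ 2 (reflDiff (u i) l) x :=
  _root_.contDiffAt_reflDiff (hu.2.1 i x hx) (hu.2.1 i _ (reflection_ne_zero he))

lemma lap_reflDiff (hu : PDESolution A β u) (i : Fin n) (hx : x ≠ 0) (he : x ≠ (2 * l, 0)) :
    lap (reflDiff (u i) l) x = -∑ j, A i j * reflDiff (density (β j) (u j)) l x := by
  have hx' := reflection_ne_zero he
  rw [_root_.lap_reflDiff (hu.2.1 i x hx) (hu.2.1 i _ hx'), reflDiff, hu.lap_eq i hx,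
    hu.lap_eq i hx']
  simp only [reflDiff, mul_sub, Finset.sum_sub_distrib]
  ring

lemma lap_reflDiff_add_mul_barrier_neg (hA : ∀ i j, 0 ≤ A i j) (hβ : ∀ i, β i ≤ 0)
    (hu : PDESolution A β u) {m K η : ℝ} {i : Fin n} (hl : 0 < l) (hm : 0 < m) (hη : 0 ≤ η)
    (hK : ∑ j, A i j ≤ K) (hKη : K * η < 7 / 64) (hx : l < x.1) (he : x ≠ (2 * l, 0))
    (hdensity : ∀ j, nrm x ^ 2 * density (β j) (u j) x ≤ η)
    (hw : ∀ j, 0 ≤ reflDiff (u j) l x + m * barrier x) :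
    lap (fun y => reflDiff (u i) l y + m * barrier y) x < 0 := by
  have hx1 : 0 < x.1 := hl.trans hx
  have hx0 : x ≠ 0 := ne_zero_of_fst_pos hx1
  have hnrm : 0 < nrm x ^ 2 := pow_pos (nrm_pos.2 hx0) 2
  have hbarrier := contDiffAt_barrier hx1
  set G := m * (barrier x / nrm x ^ 2) with hG
  have hG0 : 0 < G := mul_pos hm (div_pos (barrier_pos hx1) hnrm)
  have hdiff (j : Fin n) : -(η * G) ≤ reflDiff (density (β j) (u j)) l x := by
    have hle : density (β j) (u j) x ≤ η / nrm x ^ 2 := by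
      rw [le_div_iff₀' hnrm]
      exact hdensity j
    calc -(η * G) = -(η / nrm x ^ 2 * (m * barrier x)) := by rw [hG]; ring
      _ ≤ -(density (β j) (u j) x * (m * barrier x)) :=
          neg_le_neg (mul_le_mul_of_nonneg_right hle (mul_pos hm (barrier_pos hx1)).le)
      _ = density (β j) (u j) x * -(m * barrier x) := by ring
      _ ≤ density (β j) (u j) x * reflDiff (u j) l x :=
          mul_le_mul_of_nonneg_left (by linarith [hw j]) density_nonneg
      _ ≤ _ := density_mul_reflDiff_le (hβ j) hl hx he
  have hsum : -(K * (η * G)) ≤ ∑ j, A i j * reflDiff (density (β j) (u j)) l x :=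
    calc -(K * (η * G)) ≤ -((∑ j, A i j) * (η * G)) :=
          neg_le_neg (mul_le_mul_of_nonneg_right hK (mul_nonneg hη hG0.le))
      _ = ∑ j, A i j * -(η * G) := by rw [← Finset.sum_mul, mul_neg]
      _ ≤ _ := Finset.sum_le_sum fun j _ => mul_le_mul_of_nonneg_left (hdiff j) (hA i j)
  calc lap (fun y => reflDiff (u i) l y + m * barrier y) x
      = -(∑ j, A i j * reflDiff (density (β j) (u j)) l x) + m * lap barrier x := by
        rw [lap_add (hu.contDiffAt_reflDiff i hx0 he) (contDiffAt_const.mul hbarrier),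
          lap_const_mul, hu.lap_reflDiff i hx0 he]
    _ ≤ K * (η * G) + m * (-(7 / 64) * (barrier x / nrm x ^ 2)) :=
        add_le_add (neg_le.1 hsum) (mul_le_mul_of_nonneg_left (lap_barrier_le hx1) hm.le)
    _ = (K * η - 7 / 64) * G := by rw [hG]; ring
    _ < 0 := mul_neg_of_neg_of_pos (sub_neg.2 hKη) hG0

lemma eventually_neg_mul_barrier_lt_reflDiff (hA : ∀ i j, 0 ≤ A i j) (hβ : ∀ i, -2 < β i)
    (hβ' : ∀ i, β i ≤ 0) (hu : PDESolution A β u) (hl : 0 < l) {q : ℝ} (hq : 0 < q) :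
    ∀ᶠ x in cocompact (ℝ × ℝ), ∀ i, l ≤ x.1 → -(q * barrier x) < reflDiff (u i) l x := by
  have hexponent : ∀ᶠ s : ℝ in 𝓝[>] 0, (∀ j, s < 2 + β j) ∧ s < 1 / 8 :=
    nhdsWithin_le_nhds ((eventually_all.2 fun j => gt_mem_nhds (by linarith [hβ j])).and
      (gt_mem_nhds (by norm_num)))
  obtain ⟨s, ⟨hsβ, hs'⟩, hs⟩ := (hexponent.and eventually_mem_nhdsWithin).exists
  obtain ⟨C, hC, hlower⟩ := hu.exists_neg_mul_one_add_rpow_le hA (fun i => (hβ i).le) hβ' hs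
    fun j => (hsβ j).le
  obtain ⟨M, hupper⟩ := hu.exists_forall_le hA (fun i => (hβ i).le) hβ'
  exact eventually_all.2 fun i =>
    _root_.eventually_neg_mul_barrier_lt_reflDiff hl hs hs' hC (hlower i) (hupper i) hq

lemma exists_reflDiff_nonneg_of_nrm_le (hA : ∀ i j, 0 ≤ A i j) (hβ : ∀ i, -2 < β i)
    (hβ' : ∀ i, β i ≤ 0) (hu : PDESolution A β u) :
    ∃ R > 0, ∀ l > 0, (∀ i x, l < x.1 → nrm x ≤ R → 0 ≤ reflDiff (u i) l x) →
      ∀ i x, l < x.1 → 0 ≤ reflDiff (u i) l x := by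
  obtain ⟨K, hK, hrow⟩ := exists_pos_sum_row_le A
  obtain ⟨R, hR, hdensity⟩ := hu.exists_sq_mul_density_le hA (fun i => (hβ i).le) hβ'
    (show 0 < 1 / (16 * K) by positivity)
  refine ⟨R, hR, fun l hl hnear => ?_⟩
  by_contra! hneg
  obtain ⟨i₀, x₀, hx₀, hneg⟩ := hneg
  have hpos {x : ℝ × ℝ} (hx : l ≤ x.1) : 0 < x.1 := hl.trans_le hx
  obtain ⟨m, hm, hnonneg, i, y, hy, hyzero⟩ := exists_touching
    (isClosed_le continuous_const continuous_fst : IsClosed {x : ℝ × ℝ | l ≤ x.1})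
    (fun i => (continuous_reflDiff (hu.1 i) l).continuousOn) continuous_barrier.continuousOn
    (fun x hx => barrier_pos (hpos hx))
    (fun q hq => eventually_inf_principal.2 <|
      (hu.eventually_neg_mul_barrier_lt_reflDiff hA hβ hβ' hl hq).mono fun x h hx i => h i hx)
    ⟨i₀, x₀, hx₀.le, hneg⟩
  have hyneg : reflDiff (u i) l y < 0 := by linarith [mul_pos hm (barrier_pos (hpos hy))]
  have hly : l < y.1 := lt_of_le_of_ne hy fun h => hyneg.ne (reflDiff_of_fst_eq h.symm)
  have hRy : R < nrm y := not_le.1 fun h => hyneg.not_ge (hnear i y hly h)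
  have hΩ : IsOpen {x : ℝ × ℝ | l < x.1 ∧ R < nrm x} :=
    (isOpen_lt continuous_const continuous_fst).inter (isOpen_lt continuous_const continuous_nrm)
  refine (pos_of_lap_neg (e := (2 * l, 0)) hΩ
    ((continuous_reflDiff (hu.1 i) l).add (continuous_barrier.const_mul m)).continuousOn
    (fun x hx => hnonneg i x hx.1.le) (fun x hx he => ⟨?_, ?_⟩)
    (show y ∈ _ from ⟨hly, hRy⟩)).ne' hyzero
  · exact (hu.contDiffAt_reflDiff i (ne_zero_of_fst_pos (hl.trans hx.1)) he).add
      (contDiffAt_const.mul (contDiffAt_barrier (hl.trans hx.1)))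
  · refine hu.lap_reflDiff_add_mul_barrier_neg hA hβ' hl hm (by positivity) (hrow i) ?_ hx.1 he
      (hdensity x hx.2.le) fun j => hnonneg j x hx.1.le
    rw [mul_one_div, div_lt_div_iff₀ (by positivity) (by norm_num)]
    linarith

end Comparison

end PDESolution

end System

/-! ### Irreducibility -/

section Irreducible

variable {ι : Type*} {A : Matrix ι ι ℝ}

lemma forall_of_isIrreducible (hA : A.IsIrreducible) {p q : ι → Prop} (hqp : ∀ j, q j → p j)
    (hstep : ∀ i j, 0 < A i j → p i → q j) {i : ι} (hi : p i) (j : ι) : q j := by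
  let := A.toQuiver
  have hpath {k : ι} (γ : Quiver.Path i k) : p k ∧ (0 < γ.length → q k) := by
    induction γ with
    | nil => exact ⟨hi, fun h => absurd h (lt_irrefl 0)⟩
    | cons γ e ih => exact ⟨hqp _ (hstep _ _ e.down ih.1), fun _ => hstep _ _ e.down ih.1⟩
  obtain ⟨γ, hγ⟩ := hA.connected i j
  exact (hpath γ).2 hγ

lemma isIrreducible_of_H1 {n : ℕ} {A : Matrix (Fin n) (Fin n) ℝ} (hA : H1 A) :
    A.IsIrreducible := by
  classical
  obtain ⟨-, hnonneg, hcut, hdet⟩ := hA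
  refine (Matrix.isIrreducible_iff_exists_pow_pos hnonneg).2 fun i => ?_
  set S : Finset (Fin n) := {j | ∃ k > 0, 0 < (A ^ k) i j}
  have hmem (j : Fin n) : j ∈ S ↔ ∃ k > 0, 0 < (A ^ k) i j := Finset.mem_filter_univ j
  have hne : S.Nonempty := by
    by_contra! hempty
    have hrow (j : Fin n) : A i j = 0 := by
      by_contra hj
      refine Finset.notMem_empty j (hempty ▸ (hmem j).2 ⟨1, one_pos, ?_⟩)
      rw [pow_one]
      exact (hnonneg i j).lt_of_ne' hj
    rw [Matrix.det_eq_zero_of_row_eq_zero i hrow] at hdet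
    exact not_isUnit_zero hdet
  suffices huniv : S = Finset.univ from fun j => (hmem j).1 (huniv ▸ Finset.mem_univ j)
  by_contra hproper
  obtain ⟨a, ha, b, hb, hab⟩ := hcut S hne hproper
  obtain ⟨k, -, hk⟩ := (hmem a).1 ha
  refine Finset.mem_compl.1 hb ((hmem b).2 ⟨k + 1, k.succ_pos, ?_⟩)
  rw [pow_succ, Matrix.mul_apply]
  exact Finset.sum_pos' (fun c _ => mul_nonneg (Matrix.pow_apply_nonneg hnonneg k i c)
    (hnonneg c b)) ⟨a, Finset.mem_univ a, mul_pos hk ((hnonneg a b).lt_of_ne' hab)⟩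

end Irreducible

/-! ### The Hopf lemma and openness -/

section Hopf

variable {f : ℝ × ℝ → ℝ}

lemma hasDerivAt_reflDiff_add_fst {f' : ℝ × ℝ →L[ℝ] ℝ} {l y : ℝ} (hf : HasFDerivAt f f' (l, y)) :
    HasDerivAt (fun t => reflDiff f l (l + t, y)) (-2 * f' (1, 0)) 0 := by
  have hline (σ : ℝ) : HasDerivAt (fun t : ℝ => f (l + σ * t, y)) (σ * f' (1, 0)) 0 := by
    have hγ : HasDerivAt (fun t : ℝ => (l + σ * t, y)) (σ • ((1 : ℝ), (0 : ℝ))) 0 := by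
      simpa using (((hasDerivAt_id (0 : ℝ)).const_mul σ).const_add l).prodMk (hasDerivAt_const 0 y)
    rw [← smul_eq_mul, ← map_smul]
    exact HasFDerivAt.comp_hasDerivAt (f := fun t : ℝ => (l + σ * t, y)) 0
      (by simpa only [mul_zero, add_zero] using hf) hγ
  refine (((hline (-1)).sub (hline 1)).congr_deriv (by ring)).congr_of_eventuallyEq
    (.of_forall fun t => ?_)
  simp only [reflDiff, reflection, Pi.sub_apply]
  ring_nf

lemma apply_one_zero_neg_of_reflDiff_pos {f' : ℝ × ℝ →L[ℝ] ℝ} {l y ρ : ℝ} (hρ : 0 < ρ)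
    (hf : Continuous f) (hderiv : HasFDerivAt f f' (l, y))
    (hpos : ∀ x : ℝ × ℝ, l < x.1 → 0 < reflDiff f l x)
    (hlap : ∀ x ∈ disc (l + ρ, y) ρ,
      ContDiffAt ℝ 2 (reflDiff f l) x ∧ lap (reflDiff f l) x ≤ 0) : f' (1, 0) < 0 := by
  set p : ℝ × ℝ := (l + ρ, y) with hp
  have habs (x : ℝ × ℝ) : ρ - nrm (x - p) ≤ x.1 - l := by
    have h := (abs_le.1 (abs_fst_le_nrm (x - p))).1
    rw [Prod.fst_sub, hp] at h
    linarith
  obtain ⟨c, hc, hbarrier⟩ := exists_mul_sub_le_of_lap_nonpos (p := p) hρ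
    (continuous_reflDiff hf l).continuousOn
    (fun x hx => hpos x (by linarith [habs x, mem_disc.1 hx]))
    (fun x hx => by
      rcases (show l ≤ x.1 by linarith [habs x]).eq_or_lt with h | h
      · rw [reflDiff_of_fst_eq h.symm]
      · exact (hpos x h).le) hlap
  have hlower (t : ℝ) (ht : 0 < t) (htρ : t < ρ / 2) : c * t ≤ reflDiff f l (l + t, y) := by
    have hnrm : nrm ((l + t, y) - p) = ρ - t := by
      rw [hp, Prod.mk_sub_mk, sub_self, add_sub_add_left_eq_sub, nrm, zero_pow two_ne_zero,
        add_zero, Real.sqrt_sq_eq_abs, abs_sub_comm, abs_of_pos (by linarith)]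
    have h := hbarrier (l + t, y) (by rw [hnrm]; linarith) (by rw [hnrm]; linarith)
    rwa [hnrm, sub_sub_cancel] at h
  have hφ := hasDerivAt_reflDiff_add_fst hderiv
  have hslope : c ≤ -2 * f' (1, 0) := by
    refine ge_of_tendsto hφ.tendsto_slope_zero_right ?_
    filter_upwards [Ioo_mem_nhdsGT (half_pos hρ)] with t ht
    rw [reflDiff_of_fst_eq (x := (l + 0, y)) (add_zero l), zero_add, sub_zero, smul_eq_mul,
      inv_mul_eq_div, le_div_iff₀ ht.1]
    exact hlower t ht.1 ht.2
  linarith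

lemma eventually_reflDiff_nonneg {f' : ℝ × ℝ →L[ℝ] ℝ} {p : ℝ × ℝ} (hf : HasStrictFDerivAt f f' p)
    (hf' : f' (1, 0) < 0) :
    ∀ᶠ z : ℝ × ℝ × ℝ in 𝓝 (p.1, p), z.1 < z.2.1 → 0 ≤ reflDiff f z.1 z.2 := by
  have hpair : Tendsto (fun z : ℝ × ℝ × ℝ => (reflection z.1 z.2, z.2)) (𝓝 (p.1, p))
      (𝓝 (p, p)) := by
    have hcont : Continuous fun z : ℝ × ℝ × ℝ => (reflection z.1 z.2, z.2) := by
      unfold reflection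
      fun_prop
    simpa only [reflection_of_fst_eq] using hcont.tendsto (p.1, p)
  filter_upwards [hpair.eventually (hf.isLittleO.def (neg_pos.2 hf'))] with z hz hlt
  have hsub : reflection z.1 z.2 - z.2 = (-(2 * (z.2.1 - z.1))) • ((1 : ℝ), (0 : ℝ)) := by
    ext <;> simp [reflection]
    ring
  have hnorm : ‖reflection z.1 z.2 - z.2‖ = 2 * (z.2.1 - z.1) := by
    rw [hsub, norm_smul, norm_neg, Real.norm_of_nonneg (by linarith), Prod.norm_mk]
    simp
  rw [hnorm, hsub, map_smul, smul_eq_mul, Real.norm_eq_abs] at hz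
  have h := (abs_le.1 hz).1
  rw [reflDiff]
  linarith

end Hopf

/-! ### The moving plane -/

section MovingPlane

variable {n : ℕ} {A : Matrix (Fin n) (Fin n) ℝ} {β : Fin n → ℝ} {u : Fin n → ℝ × ℝ → ℝ}
  {l : ℝ}

namespace PDESolution

lemma contDiffAt_reflDiff_and_lap_nonpos (hA : ∀ i j, 0 ≤ A i j) (hβ : ∀ i, β i ≤ 0)
    (hu : PDESolution A β u) (hl : 0 < l) {x : ℝ × ℝ} (hx : l < x.1) (he : x ≠ (2 * l, 0))
    (hw : ∀ i, 0 ≤ reflDiff (u i) l x) (i : Fin n) :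
    ContDiffAt ℝ 2 (reflDiff (u i) l) x ∧ lap (reflDiff (u i) l) x ≤ 0 := by
  have hx0 : x ≠ 0 := ne_zero_of_fst_pos (hl.trans hx)
  refine ⟨hu.contDiffAt_reflDiff i hx0 he, ?_⟩
  rw [hu.lap_reflDiff i hx0 he, neg_nonpos]
  exact Finset.sum_nonneg fun j _ => mul_nonneg (hA i j) <|
    (mul_nonneg density_nonneg (hw j)).trans (density_mul_reflDiff_le (hβ j) hl hx he)

lemma reflDiff_eq_zero_of_eq_zero (hA : ∀ i j, 0 ≤ A i j) (hβ : ∀ i, β i ≤ 0)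
    (hu : PDESolution A β u) (hl : 0 < l) (hw : ∀ i x, l < x.1 → 0 ≤ reflDiff (u i) l x)
    {i : Fin n} {x : ℝ × ℝ} (hx : l < x.1) (hwx : reflDiff (u i) l x = 0) :
    ∀ y : ℝ × ℝ, l < y.1 → reflDiff (u i) l y = 0 :=
  eq_zero_of_lap_nonpos (e := (2 * l, 0)) (isOpen_lt continuous_const continuous_fst)
    (convex_halfSpace_gt (LinearMap.fst ℝ ℝ ℝ).isLinear l).isPreconnected
    (continuous_reflDiff (hu.1 i) l).continuousOn (hw i)
    (fun y hy he =>
      hu.contDiffAt_reflDiff_and_lap_nonpos hA hβ hl hy he (fun j => hw j y hy) i) hx hwx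

lemma reflDiff_pos_of_nonneg (hA : A.IsIrreducible) (hβ : ∀ i, β i ≤ 0) (hβ0 : ∃ i, β i ≠ 0)
    (hu : PDESolution A β u) (hl : 0 < l) (hw : ∀ i x, l < x.1 → 0 ≤ reflDiff (u i) l x)
    (i : Fin n) (x : ℝ × ℝ) (hx : l < x.1) : 0 < reflDiff (u i) l x := by
  refine (hw i x hx).lt_of_ne' fun hwx => ?_
  set P : ℝ × ℝ := (3 * l, 0)
  have hlP : l < P.1 := by linarith
  have heP : P ≠ (2 * l, 0) := fun h => by linarith [congrArg Prod.fst h]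
  have hvanish {i : Fin n} {x : ℝ × ℝ} (hx : l < x.1) (hwx : reflDiff (u i) l x = 0) :=
    hu.reflDiff_eq_zero_of_eq_zero hA.nonneg hβ hl hw hx hwx
  have hstep (i j : Fin n) (hij : 0 < A i j) (hi : reflDiff (u i) l P = 0) :
      reflDiff (u j) l P = 0 ∧ β j = 0 := by
    have hlocal : reflDiff (u i) l =ᶠ[𝓝 P] fun _ => 0 := by
      filter_upwards [(isOpen_lt continuous_const continuous_fst).eventually_mem hlP] with y hy
      exact hvanish hlP hi y hy
    have hsum : ∑ j, A i j * reflDiff (density (β j) (u j)) l P = 0 := by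
      rw [← neg_eq_zero, ← hu.lap_reflDiff i (ne_zero_of_fst_pos (hl.trans hlP)) heP,
        lap_congr hlocal, lap_const]
    have hterm := (Finset.sum_eq_zero_iff_of_nonneg fun j _ => mul_nonneg (hA.nonneg i j) <|
      (mul_nonneg density_nonneg (hw j P hlP)).trans
        (density_mul_reflDiff_le (hβ j) hl hlP heP)).1 hsum j (Finset.mem_univ j)
    exact eq_zero_of_reflDiff_density_eq_zero (hβ j) hl hlP heP (hw j P hlP)
      ((mul_eq_zero.1 hterm).resolve_left hij.ne')
  obtain ⟨j, hj⟩ := hβ0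
  exact hj (forall_of_isIrreducible hA (fun _ => And.left) hstep (hvanish hx hwx P hlP) j).2

lemma fderiv_apply_one_zero_neg (hA : ∀ i j, 0 ≤ A i j) (hβ : ∀ i, β i ≤ 0)
    (hu : PDESolution A β u) (hl : 0 < l) (hw : ∀ i x, l < x.1 → 0 < reflDiff (u i) l x)
    (i : Fin n) (y : ℝ) : fderiv ℝ (u i) (l, y) (1, 0) < 0 := by
  have hfderiv := ((hu.2.1 i (l, y) (ne_zero_of_fst_pos hl)).differentiableAt
    two_ne_zero).hasFDerivAt
  refine apply_one_zero_neg_of_reflDiff_pos (half_pos hl) (hu.1 i) hfderiv (hw i)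
    fun x hx => ?_
  have habs := abs_lt.1 ((abs_fst_le_nrm (x - (l + l / 2, y))).trans_lt (mem_disc.1 hx))
  rw [Prod.fst_sub] at habs
  have hlx : l < x.1 := by linarith [habs.1]
  exact hu.contDiffAt_reflDiff_and_lap_nonpos hA hβ hl hlx
    (fun h => by linarith [habs.2, congrArg Prod.fst h]) (fun j => (hw j x hlx).le) i

lemma eventually_reflDiff_nonneg (hA : ∀ i j, 0 ≤ A i j) (hβ : ∀ i, β i ≤ 0)
    (hu : PDESolution A β u) (hl : 0 < l) (hw : ∀ i x, l < x.1 → 0 < reflDiff (u i) l x)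
    (i : Fin n) (x : ℝ × ℝ) :
    ∀ᶠ z : ℝ × ℝ × ℝ in 𝓝 (l, x), z.1 < z.2.1 → 0 ≤ reflDiff (u i) z.1 z.2 := by
  rcases lt_trichotomy x.1 l with hx | rfl | hx
  · have hopen : IsOpen {z : ℝ × ℝ × ℝ | z.2.1 < z.1} := isOpen_lt (by fun_prop) (by fun_prop)
    filter_upwards [hopen.eventually_mem (show (l, x) ∈ _ from hx)] with z hz hz'
    exact absurd hz' (lt_asymm hz)
  · exact _root_.eventually_reflDiff_nonneg
      ((hu.2.1 i x (ne_zero_of_fst_pos hl)).hasStrictFDerivAt two_ne_zero)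
      (hu.fderiv_apply_one_zero_neg hA hβ hl hw i x.2)
  · filter_upwards [(continuous_uncurry_reflDiff (hu.1 i)).continuousAt.eventually_const_lt
      (hw i x hx)] with z hz _
    exact hz.le

theorem reflDiff_pos (hA : A.IsIrreducible) (hβ : ∀ i, -2 < β i) (hβ' : ∀ i, β i ≤ 0)
    (hβ0 : ∃ i, β i ≠ 0) (hu : PDESolution A β u) :
    ∀ l > 0, ∀ i x, l < x.1 → 0 < reflDiff (u i) l x := by
  obtain ⟨R, hR, hfar⟩ := hu.exists_reflDiff_nonneg_of_nrm_le hA.nonneg hβ hβ'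
  set U : Set ℝ := {l | 0 < l ∧ ∀ i x, l < x.1 → 0 < reflDiff (u i) l x}
  have hmem {l : ℝ} (hl : 0 < l)
      (hnear : ∀ i x, l < x.1 → nrm x ≤ R → 0 ≤ reflDiff (u i) l x) : l ∈ U :=
    ⟨hl, hu.reflDiff_pos_of_nonneg hA hβ' hβ0 hl (hfar l hl hnear)⟩
  have hRU : R ∈ U := hmem hR fun i x hx hxR =>
    absurd ((le_abs_self _).trans ((abs_fst_le_nrm x).trans hxR)) hx.not_ge
  have hopen : IsOpen U := isOpen_iff_mem_nhds.2 fun l ⟨hl, hw⟩ => by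
    have hnear : ∀ᶠ μ in 𝓝 l, ∀ x ∈ closedDisc 0 R, ∀ i, μ < x.1 → 0 ≤ reflDiff (u i) μ x :=
      isCompact_closedDisc.eventually_forall_of_forall_eventually fun x _ =>
        eventually_all.2 fun i => hu.eventually_reflDiff_nonneg hA.nonneg hβ' hl hw i x
    filter_upwards [hnear, lt_mem_nhds hl] with μ hμ hμ0
    exact hmem hμ0 fun i x hx hxR => hμ x (by rwa [mem_closedDisc, sub_zero]) i hx
  have hclosed : closure U ∩ Ioi 0 ⊆ U := fun l ⟨hlU, hl⟩ => hmem hl fun i x hx _ => by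
    have hcont : Continuous fun μ => reflDiff (u i) μ x :=
      (continuous_uncurry_reflDiff (hu.1 i)).comp (Continuous.prodMk_left x)
    refine isClosed_Ici.mem_of_frequently_of_tendsto ?_ hcont.continuousAt
    exact ((mem_closure_iff_frequently.1 hlU).and_eventually (gt_mem_nhds hx)).mono
      fun μ hμ => (hμ.1.2 i x hμ.2).le
  exact fun l hl => (isPreconnected_Ioi.subset_of_closure_inter_subset hopen ⟨R, hR, hRU⟩
    hclosed hl).2

end PDESolution

end MovingPlane

theorem moving_plane_infimum_zero_general {n : ℕ} (A : Matrix (Fin n) (Fin n) ℝ) (β : Fin n → ℝ)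
    (hA : A.IsIrreducible) (hβ : ∀ i, -2 < β i ∧ β i ≤ 0) (hβ0 : ∃ i, β i ≠ 0)
    (u : Fin n → ℝ × ℝ → ℝ) (hu : PDESolution A β u) :
    sInf {ℓ : ℝ | 0 < ℓ ∧ ∀ μ ≥ ℓ, ∀ i, ∀ x : ℝ × ℝ, μ < x.1 →
        0 < u i (2 * μ - x.1, x.2) - u i x} = 0 ∧
    ∀ i, ∀ x : ℝ × ℝ, 0 ≤ x.1 → u i (x.1, x.2) ≤ u i (-x.1, x.2) := by
  have hpos := hu.reflDiff_pos hA (fun i => (hβ i).1) (fun i => (hβ i).2) hβ0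
  refine ⟨?_, fun i x hx => ?_⟩
  · refine (congrArg sInf (Set.ext fun ℓ => ?_)).trans (csInf_Ioi (a := (0 : ℝ)))
    exact ⟨And.left, fun hℓ => ⟨hℓ, fun μ hμ => hpos μ (lt_of_lt_of_le hℓ hμ)⟩⟩
  · rcases hx.eq_or_lt with hx | hx
    · rw [← hx, neg_zero]
    have hlim : Tendsto (fun μ => reflDiff (u i) μ x) (𝓝[>] 0) (𝓝 (reflDiff (u i) 0 x)) :=
      ((continuous_uncurry_reflDiff (hu.1 i)).comp
        (Continuous.prodMk_left x)).continuousAt.continuousWithinAt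
    have hnonneg : 0 ≤ reflDiff (u i) 0 x := by
      refine ge_of_tendsto hlim ?_
      filter_upwards [Ioo_mem_nhdsGT hx] with μ hμ
      exact (hpos μ hμ.1 i x hμ.2).le
    simpa only [reflDiff, reflection, mul_zero, zero_sub, sub_nonneg] using hnonneg

theorem moving_plane_infimum_zero {n : ℕ} (hn : 0 < n)
    (A : Matrix (Fin n) (Fin n) ℝ) (β : Fin n → ℝ)
    (hA : H1 A) (hβ : ∀ i, -2 < β i ∧ β i ≤ 0) (hβ0 : ∃ i, β i ≠ 0)
    (u : Fin n → ℝ × ℝ → ℝ) (hu : PDESolution A β u) :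
    sInf {ℓ : ℝ | 0 < ℓ ∧ ∀ μ ≥ ℓ, ∀ i, ∀ x : ℝ × ℝ, μ < x.1 →
        0 < u i (2 * μ - x.1, x.2) - u i x} = 0 ∧
    ∀ i, ∀ x : ℝ × ℝ, 0 ≤ x.1 → u i (x.1, x.2) ≤ u i (-x.1, x.2) :=
  moving_plane_infimum_zero_general A β (isIrreducible_of_H1 hA) hβ hβ0 u hu
end

section
/- Let A satisfy (H1), β_i > -2 for all i ∈ I, let u be a finite-energy radial solution of the singular Liouville system, and let k ≥ 1 be an integer. Suppose φ_k = (φ_{1,k},...,φ_{n,k}) satisfies φ_{i,k}'' + (1/r) φ_{i,k}' + Σ_{j∈I} a_{ij} r^{β_j} e^{u_j(r)} φ_{j,k} − (k²/r²) φ_{i,k} = 0 for r > 0, with |φ_{i,k}(r)| ≤ C r^k (1+r)^{-2k} for all r > 0. If there exists f = (f_1,...,f_n) with f_i'' + (1/r) f_i' − (k²/r²) f_i + Σ_{j=1}^n a_{ij} r^{β_j} e^{u_j(r)} f_j < 0 for r > 0, f_i(r) > 0 for all r > 0, lim_{r→0} f_i(r)/r^k = ∞, and lim_{r→∞} f_i(r)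 r^k = ∞ for every i ∈ I, then φ_{i,k} ≡ 0 for every i ∈ I. -/
open Set MeasureTheory

/-- Radial solution of the singular Liouville system, with the finite-energy condition. -/
def RadialSolution {n : ℕ} (A : Matrix (Fin n) (Fin n) ℝ) (β : Fin n → ℝ)
    (u : Fin n → ℝ → ℝ) : Prop :=
  (∀ i, ∀ r > (0:ℝ), ContDiffAt ℝ 2 (u i) r) ∧
  (∀ i, ∀ r > (0:ℝ),
    deriv (deriv (u i)) r + (1 / r) * deriv (u i) r
      + ∑ j, A i j * r ^ β j * Real.exp (u j r) = 0) ∧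
  (∀ i, IntegrableOn (fun r : ℝ => r ^ (β i + 1) * Real.exp (u i r)) (Set.Ioi 0))

/-!
Compare `φ` with the strict supersolution `f` by sliding. If some `φ i` were positive somewhere,
then, because `φ i = o(f i)` at both ends of the half-line, the ratios `φ i / f i` would attain a
common positive maximum `t`, say at `(i, x)`. The functions `t * f j - φ j` are all nonnegative and
the `i`-th one has a zero minimum at `x`; as the coupling coefficients are nonnegative, the operator
is nonnegative on them there, against its strict negativity on `f`. Hence `φ ≤ 0`, and likewise
`-φ ≤ 0`. The prescribed decay makes `φ` an `O(r ^ k)` at `0` and an `O(r ^ (-k))` at infinity, the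
two rates which `f` dominates.
-/

open Filter Topology Asymptotics

section Maxima

variable {α β : Type*} [LinearOrder α] [TopologicalSpace α] [OrderTopology α] [CompactIccSpace α]
  [NoMaxOrder α] [LinearOrder β] [TopologicalSpace β] [OrderClosedTopology β] {a : α}

theorem exists_isMaxOn_Ioi_of_eventually_le {g : α → β} (hg : ContinuousOn g (Ioi a)) {s : α}
    (hs : a < s) (ha : ∀ᶠ r in 𝓝[>] a, g r ≤ g s) (htop : ∀ᶠ r in atTop, g r ≤ g s) :
    ∃ x ∈ Ioi a, IsMaxOn g (Ioi a) x := by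
  have : Nonempty α := ⟨a⟩
  obtain ⟨c, hc, hac⟩ := mem_nhdsGT_iff_exists_Ioo_subset.mp ha
  obtain ⟨d, hd⟩ := eventually_atTop.mp htop
  have hsub : Icc (min c s) (max d s) ⊆ Ioi a := fun r hr => (lt_min hc hs).trans_le hr.1
  have hsmem : s ∈ Icc (min c s) (max d s) := ⟨min_le_right c s, le_max_right d s⟩
  obtain ⟨x, hx, hmax⟩ := isCompact_Icc.exists_isMaxOn ⟨s, hsmem⟩ (hg.mono hsub)
  refine ⟨x, hsub hx, fun r (hr : a < r) => ?_⟩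
  by_cases hrcd : r ∈ Icc (min c s) (max d s)
  · exact hmax hrcd
  · have hrs : g r ≤ g s := by
      rcases not_and_or.mp hrcd with hlow | hhigh
      · exact hac ⟨hr, (not_le.mp hlow).trans_le (min_le_left c s)⟩
      · exact hd r ((le_max_left d s).trans (not_le.mp hhigh).le)
    exact hrs.trans (hmax hsmem)

theorem exists_forall_le_Ioi_of_tendsto_of_lt {ι : Type*} [Finite ι] {g : ι → α → β} {c : β}
    (hg : ∀ i, ContinuousOn (g i) (Ioi a)) (ha : ∀ i, Tendsto (g i) (𝓝[>] a) (𝓝 c))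
    (htop : ∀ i, Tendsto (g i) atTop (𝓝 c)) {i₀ : ι} {s : α} (hs : a < s) (hcs : c < g i₀ s) :
    ∃ i, ∃ x > a, c < g i x ∧ ∀ j, ∀ r > a, g j r ≤ g i x := by
  have := Fintype.ofFinite ι
  have hne : (Finset.univ : Finset ι).Nonempty := ⟨i₀, Finset.mem_univ i₀⟩
  let G : α → β := fun r => Finset.univ.sup' hne fun i => g i r
  have hle (j : ι) (r : α) : g j r ≤ G r :=
    Finset.le_sup' (fun i => g i r) (Finset.mem_univ j)
  have hG : ContinuousOn G (Ioi a) := .finset_sup'_apply hne fun i _ => hg i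
  have eventually_le {l : Filter α} (hl : ∀ i, Tendsto (g i) l (𝓝 c)) :
      ∀ᶠ r in l, G r ≤ G s := by
    filter_upwards [eventually_all.mpr fun i => (hl i).eventually_lt_const hcs] with r hr
    exact Finset.sup'_le hne _ fun i _ => (hr i).le.trans (hle i₀ s)
  obtain ⟨x, hx, hmax⟩ :=
    exists_isMaxOn_Ioi_of_eventually_le hG hs (eventually_le ha) (eventually_le htop)
  obtain ⟨i, -, hi : G x = g i x⟩ := Finset.exists_mem_eq_sup' hne fun i => g i x
  rw [isMaxOn_iff, hi] at hmax
  exact ⟨i, x, hx, hcs.trans_le ((hle i₀ s).trans (hmax s hs)),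
    fun j r hr => (hle j r).trans (hmax r hr)⟩

end Maxima

theorem deriv_deriv_nonneg_of_isLocalMin_s16 {w : ℝ → ℝ} {r : ℝ} (hc : ContinuousAt w r)
    (hmin : IsLocalMin w r) : 0 ≤ deriv (deriv w) r := by
  by_contra! hneg
  have hmax : IsLocalMax w r := isLocalMax_of_deriv_deriv_neg hneg hmin.deriv_eq_zero hc
  have hconst : w =ᶠ[𝓝 r] fun _ => w r := by
    filter_upwards [hmin, hmax] with s hle hge using le_antisymm hge hle
  refine hneg.ne ?_
  rw [hconst.deriv.deriv_eq]
  simp only [deriv_const', deriv_const]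

section CoupledOperator

variable {ι : Type*} [Fintype ι]

/-- The weakly coupled second-order operator `w ↦ wᵢ'' + pᵢ wᵢ' + ∑ⱼ Vᵢⱼ wⱼ - qᵢ wᵢ` on families of
functions of one variable: distinct components interact only through the zeroth-order potential
`V`. Radial systems for the `k`-th Fourier mode in the plane have `p r = 1 / r` and
`q r = k ^ 2 / r ^ 2`. -/
noncomputable def coupledOperator (p q : ι → ℝ → ℝ) (V : ι → ι → ℝ → ℝ) (w : ι → ℝ → ℝ)
    (i : ι) (r : ℝ) : ℝ :=
  deriv (deriv (w i)) r + p i r * deriv (w i) r + ∑ j, V i j r * w j r - q i r * w i r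

variable {p q : ι → ℝ → ℝ} {V : ι → ι → ℝ → ℝ} {φ f : ι → ℝ → ℝ}

theorem coupledOperator_smul (c : ℝ) (w : ι → ℝ → ℝ) (i : ι) (r : ℝ) :
    coupledOperator p q V (c • w) i r = c * coupledOperator p q V w i r := by
  have hderiv (v : ℝ → ℝ) : deriv (c • v) = c • deriv v :=
    funext fun _ => deriv_const_smul_field c v
  simp only [coupledOperator, Pi.smul_apply, hderiv, smul_eq_mul, mul_left_comm _ c,
    ← Finset.mul_sum]
  ring

theorem coupledOperator_sub {v w : ι → ℝ → ℝ} {i : ι} {r : ℝ} (hv : ContDiffAt ℝ 2 (v i) r)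
    (hw : ContDiffAt ℝ 2 (w i) r) :
    coupledOperator p q V (v - w) i r
      = coupledOperator p q V v i r - coupledOperator p q V w i r := by
  have hderiv : deriv (v i - w i) r = deriv (v i) r - deriv (w i) r :=
    deriv_sub (hv.differentiableAt two_ne_zero) (hw.differentiableAt two_ne_zero)
  have hderiv₂ : deriv (deriv (v i - w i)) r = deriv (deriv (v i)) r - deriv (deriv (w i)) r := by
    simpa only [iteratedDeriv_succ, iteratedDeriv_zero] using iteratedDeriv_sub (n := 2) hv hw
  simp only [coupledOperator, Pi.sub_apply, hderiv, hderiv₂, mul_sub, Finset.sum_sub_distrib]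
  ring

theorem coupledOperator_nonneg_of_isLocalMin {w : ι → ℝ → ℝ} {i : ι} {r : ℝ}
    (hV : ∀ j, 0 ≤ V i j r) (hc : ContinuousAt (w i) r) (hmin : IsLocalMin (w i) r)
    (hzero : w i r = 0) (hw : ∀ j, 0 ≤ w j r) : 0 ≤ coupledOperator p q V w i r := by
  simp only [coupledOperator, hmin.deriv_eq_zero, hzero, mul_zero, add_zero, sub_zero]
  exact add_nonneg (deriv_deriv_nonneg_of_isLocalMin_s16 hc hmin)
    (Finset.sum_nonneg fun j _ => mul_nonneg (hV j) (hw j))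

variable {a : ℝ}

theorem nonpos_of_coupledOperator_nonneg (hV : ∀ i j, ∀ r > a, 0 ≤ V i j r)
    (hφsmooth : ∀ i, ∀ r > a, ContDiffAt ℝ 2 (φ i) r)
    (hφ : ∀ i, ∀ r > a, 0 ≤ coupledOperator p q V φ i r)
    (hfsmooth : ∀ i, ∀ r > a, ContDiffAt ℝ 2 (f i) r)
    (hf : ∀ i, ∀ r > a, coupledOperator p q V f i r < 0) (hfpos : ∀ i, ∀ r > a, 0 < f i r)
    (ha : ∀ i, φ i =o[𝓝[>] a] f i) (htop : ∀ i, φ i =o[atTop] f i) :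
    ∀ i, ∀ r > a, φ i r ≤ 0 := by
  by_contra! ⟨i₀, s, hs, hpos⟩
  have hcont (i : ι) : ContinuousOn (fun r => φ i r / f i r) (Ioi a) := fun r hr =>
    ((hφsmooth i r hr).continuousAt.div (hfsmooth i r hr).continuousAt
      (hfpos i r hr).ne').continuousWithinAt
  obtain ⟨i, x, hx, ht, hmax⟩ := exists_forall_le_Ioi_of_tendsto_of_lt hcont
    (fun i => (ha i).tendsto_div_nhds_zero) (fun i => (htop i).tendsto_div_nhds_zero) hs
    (div_pos hpos (hfpos i₀ s hs))
  set t := φ i x / f i x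
  have hnonneg (j : ι) (r : ℝ) (hr : a < r) : 0 ≤ (t • f - φ) j r :=
    sub_nonneg.mpr ((div_le_iff₀ (hfpos j r hr)).mp (hmax j r hr))
  have hzero : (t • f - φ) i x = 0 :=
    sub_eq_zero.mpr (div_mul_cancel₀ (φ i x) (hfpos i x hx).ne')
  have hmin : IsLocalMin ((t • f - φ) i) x := by
    filter_upwards [Ioi_mem_nhds hx] with r hr
    exact hzero.trans_le (hnonneg i r hr)
  have htf : ContDiffAt ℝ 2 ((t • f) i) x := (hfsmooth i x hx).const_smul t
  have hop : 0 ≤ coupledOperator p q V (t • f - φ) i x :=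
    coupledOperator_nonneg_of_isLocalMin (fun j => hV i j x hx)
      (htf.sub (hφsmooth i x hx)).continuousAt hmin hzero fun j => hnonneg j x hx
  rw [coupledOperator_sub htf (hφsmooth i x hx), coupledOperator_smul] at hop
  linarith [hφ i x hx, mul_neg_of_pos_of_neg ht (hf i x hx)]

theorem higher_frequency_projection_vanishes_general (hV : ∀ i j, ∀ r > a, 0 ≤ V i j r)
    (hφsmooth : ∀ i, ∀ r > a, ContDiffAt ℝ 2 (φ i) r)
    (hφ : ∀ i, ∀ r > a, coupledOperator p q V φ i r = 0)
    (hfsmooth : ∀ i, ∀ r > a, ContDiffAt ℝ 2 (f i) r)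
    (hf : ∀ i, ∀ r > a, coupledOperator p q V f i r < 0) (hfpos : ∀ i, ∀ r > a, 0 < f i r)
    (ha : ∀ i, φ i =o[𝓝[>] a] f i) (htop : ∀ i, φ i =o[atTop] f i) :
    ∀ i, ∀ r > a, φ i r = 0 := by
  have hneg (i : ι) (r : ℝ) (hr : a < r) : coupledOperator p q V (-φ) i r = 0 := by
    rw [← neg_one_smul ℝ φ, coupledOperator_smul, hφ i r hr, mul_zero]
  have hle := nonpos_of_coupledOperator_nonneg hV hφsmooth (fun i r hr => (hφ i r hr).ge)
    hfsmooth hf hfpos ha htop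
  have hge := nonpos_of_coupledOperator_nonneg hV (fun i r hr => (hφsmooth i r hr).neg)
    (fun i r hr => (hneg i r hr).ge) hfsmooth hf hfpos (fun i => (ha i).neg_left)
    (fun i => (htop i).neg_left)
  exact fun i r hr => le_antisymm (hle i r hr) (neg_nonpos.mp (hge i r hr))

end CoupledOperator

section Decay

variable {k : ℕ} {C : ℝ} {φ f : ℝ → ℝ}

theorem isBigO_nhdsGT_zero_pow_of_abs_le
    (hφ : ∀ r > 0, |φ r| ≤ C * r ^ k / (1 + r) ^ (2 * k)) :
    φ =O[𝓝[>] 0] fun r => r ^ k := by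
  refine .of_bound |C| ?_
  filter_upwards [self_mem_nhdsWithin] with r (hr : 0 < r)
  calc |φ r| ≤ C * r ^ k / (1 + r) ^ (2 * k) := hφ r hr
    _ ≤ |C| * r ^ k / (1 + r) ^ (2 * k) := by gcongr; exact le_abs_self C
    _ ≤ |C| * r ^ k := div_le_self (by positivity) (one_le_pow₀ (by linarith))
    _ = |C| * ‖r ^ k‖ := by rw [Real.norm_of_nonneg (by positivity)]

theorem isBigO_atTop_inv_pow_of_abs_le
    (hφ : ∀ r > 0, |φ r| ≤ C * r ^ k / (1 + r) ^ (2 * k)) :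
    φ =O[atTop] fun r => (r ^ k)⁻¹ := by
  refine .of_bound |C| ?_
  filter_upwards [eventually_gt_atTop 0] with r hr
  calc |φ r| ≤ C * r ^ k / (1 + r) ^ (2 * k) := hφ r hr
    _ ≤ |C| * r ^ k / r ^ (2 * k) := by
      gcongr
      · exact le_abs_self C
      · linarith
    _ = |C| * (r ^ k)⁻¹ := by rw [two_mul, pow_add]; field_simp
    _ = |C| * ‖(r ^ k)⁻¹‖ := by rw [Real.norm_of_nonneg (by positivity)]

theorem isLittleO_nhdsGT_zero_of_abs_le
    (hφ : ∀ r > 0, |φ r| ≤ C * r ^ k / (1 + r) ^ (2 * k))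
    (hf : Tendsto (fun r => f r / r ^ k) (𝓝[>] 0) atTop) : φ =o[𝓝[>] 0] f :=
  (isBigO_nhdsGT_zero_pow_of_abs_le hφ).trans_isLittleO (.of_tendsto_div_atTop hf)

theorem isLittleO_atTop_of_abs_le
    (hφ : ∀ r > 0, |φ r| ≤ C * r ^ k / (1 + r) ^ (2 * k))
    (hf : Tendsto (fun r => f r * r ^ k) atTop atTop) : φ =o[atTop] f :=
  (isBigO_atTop_inv_pow_of_abs_le hφ).trans_isLittleO
    (.of_tendsto_div_atTop (by simpa only [div_inv_eq_mul] using hf))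

end Decay

theorem higher_frequency_projection_vanishes {n : ℕ} (hn : 0 < n)
    (A : Matrix (Fin n) (Fin n) ℝ) (β : Fin n → ℝ)
    (hA : H1 A) (hβ : ∀ i, -2 < β i)
    (u : Fin n → ℝ → ℝ) (hu : RadialSolution A β u)
    (k : ℕ) (hk : 1 ≤ k)
    (φ : Fin n → ℝ → ℝ)
    (hφsmooth : ∀ i, ∀ r > (0:ℝ), ContDiffAt ℝ 2 (φ i) r)
    (hφeq : ∀ i, ∀ r > (0:ℝ),
      deriv (deriv (φ i)) r + (1 / r) * deriv (φ i) r
        + ∑ j, A i j * r ^ β j * Real.exp (u j r) * φ j r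
        - ((k : ℝ) ^ 2 / r ^ 2) * φ i r = 0)
    (C : ℝ)
    (hφbd : ∀ i, ∀ r > (0:ℝ), |φ i r| ≤ C * r ^ k / (1 + r) ^ (2 * k))
    (f : Fin n → ℝ → ℝ)
    (hfsmooth : ∀ i, ∀ r > (0:ℝ), ContDiffAt ℝ 2 (f i) r)
    (hfineq : ∀ i, ∀ r > (0:ℝ),
      deriv (deriv (f i)) r + (1 / r) * deriv (f i) r
        - ((k : ℝ) ^ 2 / r ^ 2) * f i r
        + ∑ j, A i j * r ^ β j * Real.exp (u j r) * f j r < 0)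
    (hfpos : ∀ i, ∀ r > (0:ℝ), 0 < f i r)
    (hf0 : ∀ i, Filter.Tendsto (fun r : ℝ => f i r / r ^ k)
      (nhdsWithin 0 (Set.Ioi 0)) Filter.atTop)
    (hfinf : ∀ i, Filter.Tendsto (fun r : ℝ => f i r * r ^ k)
      Filter.atTop Filter.atTop) :
    ∀ i, ∀ r > (0:ℝ), φ i r = 0 := by
  have hV : ∀ i j, ∀ r > (0 : ℝ), 0 ≤ A i j * r ^ β j * Real.exp (u j r) := fun i j r hr =>
    mul_nonneg (mul_nonneg (hA.2.1 i j) (Real.rpow_nonneg hr.le _)) (Real.exp_nonneg _)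
  exact higher_frequency_projection_vanishes_general
    (p := fun _ r => 1 / r) (q := fun _ r => (k : ℝ) ^ 2 / r ^ 2) hV hφsmooth hφeq hfsmooth
    (fun i r hr => (add_sub_right_comm _ _ _).trans_lt (hfineq i r hr)) hfpos
    (fun i => isLittleO_nhdsGT_zero_of_abs_le (hφbd i) (hf0 i))
    (fun i => isLittleO_atTop_of_abs_le (hφbd i) (hfinf i))
end
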